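/- Assume (H1). Let λ_k ∈ (0,α) and suppose U_k := u_∞(·,·;λ_k) is a pulsating traveling front of (E) with limit ω_{k−1}(t) at x = −∞ and ω_k(t) at x = +∞, where ω_{k−1}, ω_k are T-periodic solutions of the ODE with 0 < ω_k(t) < ω_{k−1}(t). Then the x-independent entire solution (x,t) ↦ ω_k(t) is steeper than any entire solution w of (E) with 0 ≤ w(x,t) ≤ ω(α,t); moreover ω_k(t) = u_∞(x,t;ω_k(0)) for all (x,t) ∈ ℝ². -/

import Mathlib

open Real Filter Topology Set

noncomputable section

/-- `u` is a classical solution of `u_t = u_xx + f(t,u)` on `ℝ × I`. -/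
def IsSolOn (f : ℝ → ℝ → ℝ) (u : ℝ → ℝ → ℝ) (I : Set ℝ) : Prop :=
  ∃ ut ux uxx : ℝ → ℝ → ℝ,
    (∀ x : ℝ, ∀ t ∈ I, HasDerivAt (fun s => u x s) (ut x t) t) ∧
    (∀ x : ℝ, ∀ t ∈ I, HasDerivAt (fun y => u y t) (ux x t) x) ∧
    (∀ x : ℝ, ∀ t ∈ I, HasDerivAt (fun y => ux y t) (uxx x t) x) ∧
    ContinuousOn (fun p : ℝ × ℝ => ut p.1 p.2) (Set.univ ×ˢ I) ∧
    ContinuousOn (fun p : ℝ × ℝ => ux p.1 p.2) (Set.univ ×ˢ I) ∧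
    ContinuousOn (fun p : ℝ × ℝ => uxx p.1 p.2) (Set.univ ×ˢ I) ∧
    (∀ x : ℝ, ∀ t ∈ I, ut x t = uxx x t + f t (u x t))

/-- `u₁` is steeper than `u₂` (Definition 2.5). -/
def Steeper (T : ℝ) (u₁ u₂ : ℝ → ℝ → ℝ) : Prop :=
  ∀ (t' x₁ : ℝ) (k : ℤ), u₁ x₁ t' = u₂ x₁ (t' + k * T) →
    (∀ x t : ℝ, u₁ x (t + t') = u₂ x (t + t' + k * T)) ∨
    deriv (fun y => u₁ y t') x₁ < deriv (fun y => u₂ y (t' + k * T)) x₁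

/-- `ψ` is a `T`-periodic solution of the ODE `ω' = f(t,ω)`. -/
def IsPeriodicSol (f : ℝ → ℝ → ℝ) (T : ℝ) (ψ : ℝ → ℝ) : Prop :=
  (∀ t : ℝ, HasDerivAt ψ (f t (ψ t)) t) ∧ ∀ t : ℝ, ψ (t + T) = ψ t

/-- `ψ` is isolated from below w.r.t. the ODE. -/
def IsolatedFromBelow (f : ℝ → ℝ → ℝ) (T : ℝ) (ψ : ℝ → ℝ) : Prop :=
  ¬ ∃ φ : ℕ → ℝ → ℝ, (∀ n, IsPeriodicSol f T (φ n)) ∧ (∀ n t, φ n t < ψ t) ∧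
      TendstoUniformly φ ψ atTop

/-- `ψ` is stable from below w.r.t. the ODE. -/
def StableFromBelow (f : ℝ → ℝ → ℝ) (ψ : ℝ → ℝ) : Prop :=
  ∀ ε > 0, ∃ δ > 0, ∀ g : ℝ → ℝ, (∀ t : ℝ, HasDerivAt g (f t (g t)) t) →
    g 0 ∈ Set.Icc (ψ 0 - δ) (ψ 0) → ∀ t ≥ 0, |g t - ψ t| ≤ ε

/-- Hypothesis (H1). -/
def HypH1 (f : ℝ → ℝ → ℝ) (α : ℝ) (ωα : ℝ → ℝ) : Prop :=
  ∃ u : ℝ → ℝ → ℝ,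
    IsSolOn f u (Set.Ioi 0) ∧
    ContinuousOn (fun p : ℝ × ℝ => u p.1 p.2) (Set.univ ×ˢ Set.Ici 0) ∧
    HasCompactSupport (fun x => u x 0) ∧
    (∀ x : ℝ, 0 ≤ u x 0 ∧ u x 0 < α) ∧
    (∀ K : Set ℝ, IsCompact K → ∀ ε > 0, ∃ t₀ : ℝ, ∀ t ≥ t₀, ∀ x ∈ K, |u x t - ωα t| < ε)

/-- Hypothesis (H2). -/
def HypH2 (f : ℝ → ℝ → ℝ) (T α : ℝ) : Prop :=
  ∀ ψ : ℝ → ℝ, IsPeriodicSol f T ψ → ψ 0 ∈ Set.Ioo 0 α →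
    IsolatedFromBelow f T ψ → ¬ StableFromBelow f ψ →
    ∃ φ : ℕ → ℝ → ℝ,
      (∀ n, ContDiff ℝ 1 (φ n)) ∧
      (∀ n t, φ n (t + T) = φ n t) ∧
      (∀ n t, f t (φ n t) ≤ deriv (φ n) t) ∧
      (∀ n t, φ n t < ψ t) ∧
      TendstoUniformly φ ψ atTop

/-- The solution `ũ(·,·;a)` of (E) with Heaviside-type initial datum `α·H(a−x)`,
bounded between `0` and `ω(α,·)`. -/
def IsHeavisideSol (f : ℝ → ℝ → ℝ) (α a : ℝ) (ωα : ℝ → ℝ) (u : ℝ → ℝ → ℝ) : Prop :=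
  IsSolOn f u (Set.Ioi 0) ∧
  (∀ x : ℝ, ∀ t > 0, 0 ≤ u x t ∧ u x t ≤ ωα t) ∧
  ∀ K : Set ℝ, IsCompact K → a ∉ K → ∀ ε > 0, ∃ δ > 0, ∀ t ∈ Set.Ioo (0:ℝ) δ, ∀ x ∈ K,
    |u x t - α * (if 0 ≤ a - x then 1 else 0)| < ε

/-- `U(x,t) → ψ(t)` as `x → +∞`, locally uniformly in `t`. -/
def LimitAtPlusInf (U : ℝ → ℝ → ℝ) (ψ : ℝ → ℝ) : Prop :=
  ∀ K : Set ℝ, IsCompact K → ∀ ε > 0, ∃ M : ℝ, ∀ x ≥ M, ∀ t ∈ K, |U x t - ψ t| < ε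

/-- `U(x,t) → ψ(t)` as `x → −∞`, locally uniformly in `t`. -/
def LimitAtMinusInf (U : ℝ → ℝ → ℝ) (ψ : ℝ → ℝ) : Prop :=
  ∀ K : Set ℝ, IsCompact K → ∀ ε > 0, ∃ M : ℝ, ∀ x ≤ M, ∀ t ∈ K, |U x t - ψ t| < ε

/-- `U` connects `ωa` (at `x = −∞`) to `ωb` (at `x = +∞`). -/
def Connects (U : ℝ → ℝ → ℝ) (ωa ωb : ℝ → ℝ) : Prop :=
  LimitAtMinusInf U ωa ∧ LimitAtPlusInf U ωb

/-- A pulsating traveling front of (E) with speed `c`, limit `ωa` at `−∞`, `ωb` at `+∞`. -/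
def IsPulsatingFront (f : ℝ → ℝ → ℝ) (T : ℝ) (ωa ωb : ℝ → ℝ) (U : ℝ → ℝ → ℝ) (c : ℝ) :
    Prop :=
  IsSolOn f U Set.univ ∧
  (∃ L : ℝ, c = L / T ∧ ∀ x t : ℝ, U x t = U (x - L) (t + T)) ∧
  Connects U ωa ωb

/-- A propagating terrace of (E) connecting `0` to `ωα`. -/
def IsTerrace (f : ℝ → ℝ → ℝ) (T : ℝ) (ωα : ℝ → ℝ) (N : ℕ)
    (ω : ℕ → ℝ → ℝ) (U : ℕ → ℝ → ℝ → ℝ) (c : ℕ → ℝ) : Prop :=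
  1 ≤ N ∧
  (∀ k ≤ N, IsPeriodicSol f T (ω k)) ∧
  (∀ t, ω 0 t = ωα t) ∧ (∀ t, ω N t = 0) ∧
  (∀ k, k < N → ∀ t, ω (k + 1) t < ω k t) ∧
  (∀ k, 1 ≤ k → k ≤ N → IsPulsatingFront f T (ω (k - 1)) (ω k) (U k) (c k)) ∧
  0 ≤ c 1 ∧ (∀ k, 1 ≤ k → k < N → c k ≤ c (k + 1))

/-- A minimal propagating terrace (Definition 1.4). -/
def IsMinimalTerrace (f : ℝ → ℝ → ℝ) (T : ℝ) (ωα : ℝ → ℝ) (N : ℕ)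
    (ω : ℕ → ℝ → ℝ) (U : ℕ → ℝ → ℝ → ℝ) (c : ℕ → ℝ) : Prop :=
  IsTerrace f T ωα N ω U c ∧
  (∀ (N' : ℕ) (ψ : ℕ → ℝ → ℝ) (V : ℕ → ℝ → ℝ → ℝ) (c' : ℕ → ℝ),
      IsTerrace f T ωα N' ψ V c' → ∀ k ≤ N, ∃ j ≤ N', ∀ t, ω k t = ψ j t) ∧
  (∀ k, 1 ≤ k → k ≤ N → ∀ V : ℝ → ℝ → ℝ, IsSolOn f V Set.univ →
      Connects V (ω (k - 1)) (ω k) → Steeper T (U k) V)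


/-- `V` is the locally uniform limit of the shifted solutions `u(· + ℓ j, · + jT)`. -/
def IsULimit (u : ℝ → ℝ → ℝ) (ℓ : ℕ → ℝ) (T : ℝ) (V : ℝ → ℝ → ℝ) : Prop :=
  ∀ K : Set (ℝ × ℝ), IsCompact K → ∀ ε > 0, ∃ J : ℕ, ∀ j ≥ J, ∀ p ∈ K,
    |u (p.1 + ℓ j) (p.2 + (j : ℝ) * T) - V p.1 p.2| < ε

/-!
The difference of the Heaviside solution and any other solution between `0` and `ω(α, ·)` satisfies
a linear parabolic equation and, initially, is nonnegative on the left of the jump and nonpositive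
on the right. Applying the minimum principle on the half plane `x ≤ y` to the product of its
negative part at `x` and its positive part at `y` shows that this single sign change persists.
The resulting comparison (above somewhere implies not below to the right) passes to the limit
`U_k`, then to the limit `ω_k` of `U_k` as `x → +∞`. As `ω_k` does not depend on `x`, the comparison
may be reflected, so every solution between `0` and `ω(α, ·)`, or limit of such, lies on one side of
`ω_k` at each time. By the strong maximum principle, proved with a heat kernel barrier, one that
touches `ω_k` coincides with it. Hence in the definition of steepness the first alternative always
holds, and `u_∞(·, ·; ω_k(0))`, which touches `ω_k` at the origin, equals `ω_k`.
-/

open scoped NNReal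

/-! ### Second derivatives and the parabolic minimum principle -/

/-- `φ` is differentiable near `x`, and its derivative has derivative `d` at `x`. -/
def HasSecondDerivAt (φ : ℝ → ℝ) (d x : ℝ) : Prop :=
  ∃ φ' : ℝ → ℝ, (∀ᶠ y in 𝓝 x, HasDerivAt φ (φ' y) y) ∧ HasDerivAt φ' d x

namespace HasSecondDerivAt

variable {φ χ : ℝ → ℝ} {d e x : ℝ}

lemma const (c x : ℝ) : HasSecondDerivAt (fun _ => c) 0 x :=
  ⟨0, .of_forall fun y => hasDerivAt_const y c, hasDerivAt_const x 0⟩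

lemma sq (x : ℝ) : HasSecondDerivAt (fun y => y ^ 2) 2 x :=
  ⟨fun y => 2 * y, .of_forall fun y => by simpa using hasDerivAt_pow 2 y,
    by simpa using (hasDerivAt_id x).const_mul 2⟩

lemma add (hφ : HasSecondDerivAt φ d x) (hχ : HasSecondDerivAt χ e x) :
    HasSecondDerivAt (fun y => φ y + χ y) (d + e) x := by
  obtain ⟨φ', hφ, hφ'⟩ := hφ
  obtain ⟨χ', hχ, hχ'⟩ := hχ
  exact ⟨fun y => φ' y + χ' y, by filter_upwards [hφ, hχ] with y h₁ h₂ using h₁.add h₂,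
    hφ'.add hχ'⟩

lemma const_mul (c : ℝ) (hφ : HasSecondDerivAt φ d x) :
    HasSecondDerivAt (fun y => c * φ y) (c * d) x := by
  obtain ⟨φ', hφ, hφ'⟩ := hφ
  exact ⟨fun y => c * φ' y, hφ.mono fun y h => h.const_mul c, hφ'.const_mul c⟩

lemma congr_of_eventuallyEq (hφ : HasSecondDerivAt φ d x) (h : χ =ᶠ[𝓝 x] φ) :
    HasSecondDerivAt χ d x := by
  obtain ⟨φ', hφ, hφ'⟩ := hφ
  exact ⟨φ', by filter_upwards [hφ, h.eventuallyEq_nhds] with y h₁ h₂ using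
    h₁.congr_of_eventuallyEq h₂, hφ'⟩

lemma nonneg_of_isLocalMin (hφ : HasSecondDerivAt φ d x) (hmin : IsLocalMin φ x) : 0 ≤ d := by
  obtain ⟨φ', hφ, hφ'⟩ := hφ
  have hderiv : deriv φ =ᶠ[𝓝 x] φ' := hφ.mono fun y h => h.deriv
  by_contra! hd
  have hmax : IsLocalMax φ x := isLocalMax_of_deriv_deriv_neg
    (by rwa [hderiv.deriv_eq, hφ'.deriv]) hmin.deriv_eq_zero hφ.self_of_nhds.continuousAt
  have hconst : φ =ᶠ[𝓝 x] fun _ => φ x := by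
    filter_upwards [hmin, hmax] with y h₁ h₂ using le_antisymm h₂ h₁
  have hφ'0 : φ' =ᶠ[𝓝 x] fun _ => 0 := by simpa using hderiv.symm.trans hconst.deriv
  exact hd.ne (hφ'.unique ((hasDerivAt_const x 0).congr_of_eventuallyEq hφ'0))

end HasSecondDerivAt

lemma hasDerivAt_nonpos_of_forall_nhdsLT_le {φ : ℝ → ℝ} {d t : ℝ} (h : HasDerivAt φ d t)
    (hmin : ∀ᶠ s in 𝓝[<] t, φ t ≤ φ s) : d ≤ 0 := by
  refine le_of_tendsto (h.tendsto_slope.mono_left (nhdsLT_le_nhdsNE t)) ?_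
  filter_upwards [hmin, self_mem_nhdsWithin] with s hs hst
  rw [slope_def_field]
  exact div_nonpos_of_nonneg_of_nonpos (sub_nonneg.2 hs) (sub_nonpos.2 hst.le)

/-- At the point `(x, t)`, the function `w` of `n` space variables and time satisfies
`w_t ≥ Δw + C w`. -/
def IsSupersolAt {ι : Type*} [Fintype ι] [DecidableEq ι] (C : ℝ) (w : (ι → ℝ) → ℝ → ℝ)
    (x : ι → ℝ) (t : ℝ) : Prop :=
  ∃ (wt : ℝ) (wxx : ι → ℝ), HasDerivAt (w x) wt t ∧
    (∀ i, HasSecondDerivAt (fun z => w (Function.update x i z) t) (wxx i) (x i)) ∧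
    ∑ i, wxx i + C * w x t ≤ wt

section MinimumPrinciple

variable {ι : Type*} [Fintype ι] {Q : Set (ι → ℝ)} {w : (ι → ℝ) → ℝ → ℝ} {C N s t₁ : ℝ}

lemma exists_isMinOn_add_sq (hQ : IsClosed Q)
    (hcont : ContinuousOn (fun p : (ι → ℝ) × ℝ => w p.1 p.2) (Q ×ˢ Icc s t₁))
    (hbdd : ∀ x ∈ Q, ∀ t ∈ Icc s t₁, -N ≤ w x t) {ε κ : ℝ} (hε : 0 < ε) (hκ : 0 ≤ κ)
    {x₀ : ι → ℝ} {t₀ : ℝ} (hx₀ : x₀ ∈ Q) (ht₀ : t₀ ∈ Icc s t₁) :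
    ∃ p ∈ Q ×ˢ Icc s t₁, IsMinOn (fun p : (ι → ℝ) × ℝ =>
      w p.1 p.2 + ε * (∑ i, p.1 i ^ 2 + κ * (p.2 - s))) (Q ×ˢ Icc s t₁) p := by
  set G : (ι → ℝ) × ℝ → ℝ := fun p => w p.1 p.2 + ε * (∑ i, p.1 i ^ 2 + κ * (p.2 - s))
  have hGcont : ContinuousOn G (Q ×ˢ Icc s t₁) := hcont.add (by fun_prop)
  obtain ⟨R, hR0, hR⟩ : ∃ R, 0 ≤ R ∧ N + G (x₀, t₀) ≤ ε * R ^ 2 :=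
    ((eventually_ge_atTop 0).and ((tendsto_pow_atTop two_ne_zero).const_mul_atTop hε
      |>.eventually_ge_atTop (N + G (x₀, t₀)))).exists
  have hfar : ∀ p ∈ Q ×ˢ Icc s t₁, p ∉ Metric.closedBall (0 : ι → ℝ) R ×ˢ Icc s t₁ →
      G (x₀, t₀) ≤ G p := by
    rintro ⟨x, t⟩ ⟨hx, ht⟩ hp
    obtain ⟨i, hi⟩ : ∃ i, R < |x i| := by
      by_contra! h
      exact hp ⟨mem_closedBall_zero_iff.2 ((pi_norm_le_iff_of_nonneg hR0).2 h), ht⟩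
    have hsum : R ^ 2 ≤ ∑ j, x j ^ 2 := calc
      R ^ 2 ≤ x i ^ 2 := by rw [← sq_abs (x i)]; gcongr
      _ ≤ ∑ j, x j ^ 2 :=
        Finset.single_le_sum (f := fun j => x j ^ 2) (fun j _ => sq_nonneg _) (Finset.mem_univ i)
    have htime : 0 ≤ κ * (t - s) := mul_nonneg hκ (sub_nonneg.2 ht.1)
    have hRε : ε * R ^ 2 ≤ ε * (∑ j, x j ^ 2 + κ * (t - s)) := by gcongr; linarith
    linarith [hbdd x hx t ht]
  refine hGcont.exists_isMinOn' (hQ.prod isClosed_Icc) (mk_mem_prod hx₀ ht₀) ?_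
  filter_upwards [mem_inf_of_left ((isCompact_closedBall (0 : ι → ℝ) R).prod
    (isCompact_Icc (a := s) (b := t₁))).compl_mem_cocompact,
    mem_inf_of_right (mem_principal_self _)] with p hp hpQ using hfar p hpQ hp

variable [DecidableEq ι]

lemma sum_update_sq (x : ι → ℝ) (i : ι) (z : ℝ) :
    ∑ j, Function.update x i z j ^ 2 = z ^ 2 + ∑ j ∈ {i}ᶜ, x j ^ 2 := by
  rw [Fintype.sum_eq_add_sum_compl i, Function.update_self]
  congr 1
  refine Finset.sum_congr rfl fun j hj => ?_
  rw [Function.update_of_ne (by simpa using hj)]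

lemma IsSupersolAt.not_isMinOn_add_sq {x : ι → ℝ} {t ε : ℝ} (hw : IsSupersolAt 0 w x t)
    (hε : 0 < ε) (hst : s < t) (ht : t ≤ t₁) (hQ : Q ∈ 𝓝 x) :
    ¬ IsMinOn (fun p : (ι → ℝ) × ℝ =>
      w p.1 p.2 + ε * (∑ i, p.1 i ^ 2 + (2 * Fintype.card ι + 1) * (p.2 - s)))
      (Q ×ˢ Icc s t₁) (x, t) := by
  intro hmin
  obtain ⟨wt, wxx, hwt, hwxx, hineq⟩ := hw
  set n := (Fintype.card ι : ℝ) with hn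
  have htime : wt + ε * (2 * n + 1) ≤ 0 := by
    have hderiv : HasDerivAt (fun τ => w x τ + ε * (∑ i, x i ^ 2 + (2 * n + 1) * (τ - s)))
        (wt + ε * (2 * n + 1)) t := by
      simpa using hwt.fun_add
        (((((hasDerivAt_id t).sub_const s).const_mul (2 * n + 1)).const_add _).const_mul ε)
    refine hasDerivAt_nonpos_of_forall_nhdsLT_le hderiv ?_
    filter_upwards [Ioo_mem_nhdsLT hst] with τ hτ
    exact hmin (mk_mem_prod (mem_of_mem_nhds hQ) ⟨hτ.1.le, hτ.2.le.trans ht⟩)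
  have hspace : ∀ i, 0 ≤ wxx i + ε * 2 := fun i => by
    have hsecond : HasSecondDerivAt (fun z => w (Function.update x i z) t +
        ε * (∑ j, Function.update x i z j ^ 2 + (2 * n + 1) * (t - s))) (wxx i + ε * 2) (x i) := by
      simpa only [sum_update_sq, add_zero] using (hwxx i).add ((((HasSecondDerivAt.sq (x i)).add
        (HasSecondDerivAt.const _ _)).add (HasSecondDerivAt.const _ _)).const_mul ε)
    have hupdate : Tendsto (Function.update x i) (𝓝 (x i)) (𝓝 x) := by
      have : Continuous (Function.update x i) := continuous_const.update i continuous_id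
      simpa using this.tendsto (x i)
    refine hsecond.nonneg_of_isLocalMin ?_
    filter_upwards [hupdate hQ] with z hz
    simpa using hmin (mk_mem_prod hz ⟨hst.le, ht⟩)
  have hsum : 0 ≤ ∑ i, wxx i + n * (ε * 2) := by
    have := Finset.sum_nonneg fun i (_ : i ∈ Finset.univ) => hspace i
    simpa [Finset.sum_add_distrib, hn] using this
  linarith

lemma nonneg_of_isSupersolAt_zero (hQ : IsClosed Q)
    (hcont : ContinuousOn (fun p : (ι → ℝ) × ℝ => w p.1 p.2) (Q ×ˢ Icc s t₁))
    (hbdd : ∀ x ∈ Q, ∀ t ∈ Icc s t₁, -N ≤ w x t)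
    (hw : ∀ x ∈ Q, ∀ t ∈ Icc s t₁, w x t < 0 → s < t ∧ Q ∈ 𝓝 x ∧ IsSupersolAt 0 w x t)
    {x : ι → ℝ} {t : ℝ} (hx : x ∈ Q) (ht : t ∈ Icc s t₁) : 0 ≤ w x t := by
  by_contra! hneg
  set r : ℝ := ∑ i, x i ^ 2 + (2 * Fintype.card ι + 1) * (t - s)
  have hr : 0 ≤ r := by have := sub_nonneg.2 ht.1; positivity
  obtain ⟨ε, hε, hεr⟩ : ∃ ε > 0, w x t + ε * r < 0 := by
    refine ⟨-w x t / (r + 1), div_pos (neg_pos.2 hneg) (by linarith), ?_⟩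
    have : r / (r + 1) < 1 := (div_lt_one (by linarith)).2 (by linarith)
    rw [div_mul_eq_mul_div, mul_div_assoc]
    nlinarith
  obtain ⟨⟨y, τ⟩, hyτ, hmin⟩ := exists_isMinOn_add_sq hQ hcont hbdd hε
    (κ := 2 * Fintype.card ι + 1) (by positivity) hx ht
  have hwneg : w y τ < 0 := by
    have hle := hmin (mk_mem_prod hx ht)
    have : 0 ≤ ∑ i, y i ^ 2 + (2 * Fintype.card ι + 1) * (τ - s) := by
      have := sub_nonneg.2 hyτ.2.1; positivity
    rw [mem_ofPred_eq] at hle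
    nlinarith
  obtain ⟨hsτ, hQy, hsuper⟩ := hw y hyτ.1 τ hyτ.2 hwneg
  exact hsuper.not_isMinOn_add_sq hε hsτ hyτ.2.2 hQy hmin

lemma IsSupersolAt.congr_of_eventuallyEq {w' : (ι → ℝ) → ℝ → ℝ} {x : ι → ℝ} {t : ℝ}
    (hw : IsSupersolAt C w x t) (htime : w' x =ᶠ[𝓝 t] w x)
    (hspace : ∀ i, (fun z => w' (Function.update x i z) t) =ᶠ[𝓝 (x i)]
      fun z => w (Function.update x i z) t) : IsSupersolAt C w' x t := by
  obtain ⟨wt, wxx, hwt, hwxx, hle⟩ := hw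
  exact ⟨wt, wxx, hwt.congr_of_eventuallyEq htime,
    fun i => (hwxx i).congr_of_eventuallyEq (hspace i), by rwa [htime.self_of_nhds]⟩

lemma IsSupersolAt.exp_neg_mul {x : ι → ℝ} {t : ℝ} (hw : IsSupersolAt C w x t) :
    IsSupersolAt 0 (fun y τ => exp (-(C * (τ - s))) * w y τ) x t := by
  obtain ⟨wt, wxx, hwt, hwxx, hineq⟩ := hw
  have hexp : HasDerivAt (fun τ => exp (-(C * (τ - s)))) (exp (-(C * (t - s))) * -C) t := by
    simpa using (((hasDerivAt_id t).sub_const s).const_mul C).neg.exp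
  refine ⟨_, fun i => exp (-(C * (t - s))) * wxx i, hexp.mul hwt,
    fun i => (hwxx i).const_mul _, ?_⟩
  rw [← Finset.mul_sum]
  nlinarith [mul_le_mul_of_nonneg_left hineq (exp_nonneg (-(C * (t - s))))]

theorem nonneg_of_isSupersolAt (hQ : IsClosed Q)
    (hcont : ContinuousOn (fun p : (ι → ℝ) × ℝ => w p.1 p.2) (Q ×ˢ Icc s t₁))
    (hbdd : ∀ x ∈ Q, ∀ t ∈ Icc s t₁, -N ≤ w x t)
    (hw : ∀ x ∈ Q, ∀ t ∈ Icc s t₁, w x t < 0 → s < t ∧ Q ∈ 𝓝 x ∧ IsSupersolAt C w x t)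
    {x : ι → ℝ} {t : ℝ} (hx : x ∈ Q) (ht : t ∈ Icc s t₁) : 0 ≤ w x t := by
  refine nonneg_of_mul_nonneg_right (nonneg_of_isSupersolAt_zero
    (w := fun y τ => exp (-(C * (τ - s))) * w y τ) (N := exp (|C| * (t₁ - s)) * |N|)
    hQ ((by fun_prop : ContinuousOn _ _).mul hcont)
    (fun y hy τ hτ => ?_) (fun y hy τ hτ hneg => ?_) hx ht) (exp_pos (-(C * (t - s))))
  · have hexp : exp (-(C * (τ - s))) ≤ exp (|C| * (t₁ - s)) := exp_le_exp.2 (by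
      have := neg_abs_le C
      nlinarith [abs_nonneg C, hτ.1, hτ.2])
    have hN : -|N| ≤ w y τ := (neg_le_neg (le_abs_self N)).trans (hbdd y hy τ hτ)
    nlinarith [abs_nonneg N, exp_pos (-(C * (τ - s)))]
  · obtain ⟨hsτ, hQy, hsuper⟩ := hw y hy τ hτ (by
      by_contra! h
      exact hneg.not_ge (mul_nonneg (exp_nonneg _) h))
    exact ⟨hsτ, hQy, hsuper.exp_neg_mul⟩

end MinimumPrinciple

/-! ### The heat operator and the heat kernel -/

/-- At `(x, t)`, the function `u` of one space variable and time has the derivatives `u_t` and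
`u_xx`, and `u_t - u_xx = h`. -/
def HasHeatOpAt (u : ℝ → ℝ → ℝ) (h x t : ℝ) : Prop :=
  ∃ ut uxx : ℝ, HasDerivAt (u x) ut t ∧ HasSecondDerivAt (fun y => u y t) uxx x ∧ ut - uxx = h

namespace HasHeatOpAt

variable {u v : ℝ → ℝ → ℝ} {h k x t : ℝ}

lemma const (c x t : ℝ) : HasHeatOpAt (fun _ _ => c) 0 x t :=
  ⟨0, 0, hasDerivAt_const t c, .const c x, sub_zero 0⟩

lemma add (hu : HasHeatOpAt u h x t) (hv : HasHeatOpAt v k x t) :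
    HasHeatOpAt (fun y τ => u y τ + v y τ) (h + k) x t := by
  obtain ⟨ut, uxx, hut, huxx, rfl⟩ := hu
  obtain ⟨vt, vxx, hvt, hvxx, rfl⟩ := hv
  exact ⟨ut + vt, uxx + vxx, hut.add hvt, huxx.add hvxx, by ring⟩

lemma time_mul {g : ℝ → ℝ} {g' : ℝ} (hg : HasDerivAt g g' t) (hu : HasHeatOpAt u h x t) :
    HasHeatOpAt (fun y τ => g τ * u y τ) (g' * u x t + g t * h) x t := by
  obtain ⟨ut, uxx, hut, huxx, rfl⟩ := hu
  exact ⟨_, _, hg.mul hut, huxx.const_mul (g t), by ring⟩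

lemma const_mul (c : ℝ) (hu : HasHeatOpAt u h x t) :
    HasHeatOpAt (fun y τ => c * u y τ) (c * h) x t := by
  simpa using hu.time_mul (hasDerivAt_const t c)

lemma comp_sub_add {z c : ℝ} (hu : HasHeatOpAt u h (x - z) (c + t)) :
    HasHeatOpAt (fun y τ => u (y - z) (c + τ)) h x t := by
  obtain ⟨ut, uxx, hut, ⟨u', hu', huxx⟩, hh⟩ := hu
  have hshift : Tendsto (fun y => y - z) (𝓝 x) (𝓝 (x - z)) :=
    (continuous_id.sub continuous_const).tendsto x
  exact ⟨ut, uxx, hut.comp_const_add c t, ⟨fun y => u' (y - z),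
    (hshift.eventually hu').mono fun y hy => hy.comp_sub_const y z, huxx.comp_sub_const x z⟩, hh⟩

end HasHeatOpAt

lemma nonneg_of_hasHeatOpAt {D : ℝ → ℝ → ℝ} {C N s t₁ : ℝ}
    (hcont : ContinuousOn (fun p : ℝ × ℝ => D p.1 p.2) (univ ×ˢ Icc s t₁))
    (hbdd : ∀ x, ∀ t ∈ Icc s t₁, -N ≤ D x t) (hinit : ∀ x, 0 ≤ D x s)
    (hD : ∀ x, ∀ t ∈ Icc s t₁, D x t < 0 → ∃ h, HasHeatOpAt D h x t ∧ C * D x t ≤ h)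
    (x : ℝ) {t : ℝ} (ht : t ∈ Icc s t₁) : 0 ≤ D x t := by
  refine nonneg_of_isSupersolAt (ι := Unit) (Q := univ) (w := fun y τ => D (y ()) τ) (C := C)
    isClosed_univ (hcont.comp (f := fun p : (Unit → ℝ) × ℝ => (p.1 (), p.2)) (by fun_prop)
      fun p hp => ⟨trivial, hp.2⟩)
    (fun y _ => hbdd (y ())) (fun y _ τ hτ hneg => ⟨?_, univ_mem, ?_⟩) (mem_univ fun _ => x) ht
  · refine lt_of_le_of_ne hτ.1 ?_
    rintro rfl
    exact (hinit _).not_gt hneg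
  · obtain ⟨h, ⟨Dt, Dxx, hDt, hDxx, rfl⟩, hle⟩ := hD _ τ hτ hneg
    exact ⟨Dt, fun _ => Dxx, hDt, fun i => by simpa using hDxx, by simpa using by linarith⟩

/-- `u` is continuous on `ℝ × I` and solves the heat equation `u_t = u_xx` there. -/
structure IsCaloricOn (u : ℝ → ℝ → ℝ) (I : Set ℝ) : Prop where
  continuousOn : ContinuousOn (fun p : ℝ × ℝ => u p.1 p.2) (univ ×ˢ I)
  hasHeatOpAt : ∀ x, ∀ t ∈ I, HasHeatOpAt u 0 x t

namespace IsCaloricOn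

variable {u v : ℝ → ℝ → ℝ} {I J : Set ℝ}

lemma const (c : ℝ) (I : Set ℝ) : IsCaloricOn (fun _ _ => c) I :=
  ⟨continuousOn_const, fun x t _ => .const c x t⟩

lemma sq_add (s : ℝ) (I : Set ℝ) : IsCaloricOn (fun x t => x ^ 2 + 2 * (t - s)) I where
  continuousOn := by fun_prop
  hasHeatOpAt x t _ := by
    refine ⟨2, 2, ?_, ?_, sub_self 2⟩
    · simpa using (((hasDerivAt_id t).sub_const s).const_mul 2).const_add (x ^ 2)
    · simpa using (HasSecondDerivAt.sq x).add (.const (2 * (t - s)) x)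

lemma mono (hu : IsCaloricOn u I) (hJ : J ⊆ I) : IsCaloricOn u J :=
  ⟨hu.continuousOn.mono (prod_mono le_rfl hJ), fun x t ht => hu.hasHeatOpAt x t (hJ ht)⟩

lemma add (hu : IsCaloricOn u I) (hv : IsCaloricOn v I) :
    IsCaloricOn (fun x t => u x t + v x t) I :=
  ⟨hu.continuousOn.add hv.continuousOn, fun x t ht => by
    simpa using (hu.hasHeatOpAt x t ht).add (hv.hasHeatOpAt x t ht)⟩

lemma const_mul (c : ℝ) (hu : IsCaloricOn u I) : IsCaloricOn (fun x t => c * u x t) I :=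
  ⟨continuousOn_const.mul hu.continuousOn, fun x t ht => by
    simpa using (hu.hasHeatOpAt x t ht).const_mul c⟩

end IsCaloricOn

/-- The one-dimensional heat kernel, without the factor `(4π)^(-1/2)`. It vanishes for `τ ≤ 0`
since `√τ = 0` there. -/
def heatKernel (x τ : ℝ) : ℝ := (√τ)⁻¹ * exp (-(x ^ 2 / (4 * τ)))

section HeatKernel

variable {x y z τ : ℝ}

lemma heatKernel_nonneg (x τ : ℝ) : 0 ≤ heatKernel x τ := by unfold heatKernel; positivity

lemma heatKernel_pos (x : ℝ) (hτ : 0 < τ) : 0 < heatKernel x τ := by unfold heatKernel; positivity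

lemma heatKernel_le_inv_sqrt (x : ℝ) (hτ : 0 ≤ τ) : heatKernel x τ ≤ (√τ)⁻¹ :=
  mul_le_of_le_one_right (by positivity) (exp_le_one_iff.2 (neg_nonpos.2 (by positivity)))

lemma heatKernel_le_of_abs_le (hτ : 0 ≤ τ) (hxy : |x| ≤ |y|) :
    heatKernel y τ ≤ heatKernel x τ := by
  have := sq_le_sq.2 hxy
  unfold heatKernel
  gcongr

lemma heatKernel_self_sq_div_four {ε : ℝ} (hε : 0 < ε) :
    heatKernel ε (ε ^ 2 / 4) = 2 / ε * exp (-1) := by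
  have hsqrt : √(ε ^ 2 / 4) = ε / 2 := by
    rw [show ε ^ 2 / 4 = (ε / 2) ^ 2 by ring, sqrt_sq (by positivity)]
  rw [heatKernel, hsqrt, inv_div]
  congr 3
  field_simp

lemma continuousOn_heatKernel :
    ContinuousOn (fun p : ℝ × ℝ => heatKernel p.1 p.2) (univ ×ˢ Ioi 0) := by
  intro p hp
  have hτ : 0 < p.2 := hp.2
  have h₁ : √p.2 ≠ 0 := by positivity
  have h₂ : 4 * p.2 ≠ 0 := by positivity
  unfold heatKernel
  refine ContinuousAt.continuousWithinAt ?_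
  fun_prop (disch := assumption)

lemma hasHeatOpAt_heatKernel (x : ℝ) (hτ : 0 < τ) : HasHeatOpAt heatKernel 0 x τ := by
  have hsqrt : √τ ^ 2 = τ := sq_sqrt hτ.le
  have htime : HasDerivAt (heatKernel x)
      ((x ^ 2 / (4 * τ ^ 2) - 1 / (2 * τ)) * heatKernel x τ) τ := by
    have hquot : HasDerivAt (fun σ : ℝ => x ^ 2 / (4 * σ)) (-(x ^ 2 / (4 * τ ^ 2))) τ := by
      refine ((hasDerivAt_const τ (x ^ 2)).fun_div ((hasDerivAt_id τ).const_mul 4)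
        (by simp [hτ.ne'])).congr_deriv ?_
      simp only [id_eq, zero_mul, mul_one, zero_sub]
      field_simp
    refine (((hasDerivAt_sqrt hτ.ne').inv (by positivity)).mul hquot.neg.exp).congr_deriv ?_
    simp only [one_div, mul_inv_rev, Pi.neg_apply, Pi.inv_apply, neg_neg, heatKernel]
    field_simp
    rw [hsqrt]
    ring
  have hspace (y : ℝ) : HasDerivAt (fun z => heatKernel z τ)
      (-(y / (2 * τ)) * heatKernel y τ) y := by
    refine (((hasDerivAt_pow 2 y).div_const (4 * τ)).neg.exp.const_mul (√τ)⁻¹).congr_deriv ?_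
    simp only [Pi.neg_apply, Nat.cast_ofNat, Nat.add_one_sub_one, pow_one, heatKernel]
    ring
  have hspace₂ : HasDerivAt (fun y => -(y / (2 * τ)) * heatKernel y τ)
      ((x ^ 2 / (4 * τ ^ 2) - 1 / (2 * τ)) * heatKernel x τ) x := by
    refine (((hasDerivAt_id x).div_const (2 * τ)).neg.mul (hspace x)).congr_deriv ?_
    simp only [id_eq, Pi.neg_apply]
    ring
  exact ⟨_, _, htime, ⟨_, .of_forall hspace, hspace₂⟩, sub_self _⟩

lemma isCaloricOn_heatKernel (z : ℝ) (hτ : 0 < τ) (s : ℝ) :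
    IsCaloricOn (fun x t => heatKernel (x - z) (τ - s + t)) (Ici s) where
  continuousOn := continuousOn_heatKernel.comp (f := fun p : ℝ × ℝ => (p.1 - z, τ - s + p.2))
    (by fun_prop) fun p hp => ⟨trivial, show 0 < τ - s + p.2 by linarith [show s ≤ p.2 from hp.2]⟩
  hasHeatOpAt x t ht := (hasHeatOpAt_heatKernel (x - z)
    (by linarith [show s ≤ t from ht])).comp_sub_add

lemma tendsto_heatKernel_nhdsGT_zero (hx : x ≠ 0) :
    Tendsto (heatKernel x) (𝓝[>] 0) (𝓝 0) := by
  refine ((tendsto_rpow_mul_exp_neg_mul_atTop_nhds_zero (1 / 2) (x ^ 2 / 4)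
    (by positivity)).comp tendsto_inv_nhdsGT_zero).congr fun τ => ?_
  rw [Function.comp_apply, ← sqrt_eq_rpow, sqrt_inv, heatKernel]
  congr 2
  ring

lemma exists_mul_heatKernel_lt {a b ρ L : ℝ} (hb : 0 < b) (hρ : ρ ≠ 0) (hL : 0 < L) (x : ℝ) :
    ∃ τ > 0, a * heatKernel ρ τ < b * heatKernel x (τ + L) := by
  have hleft : Tendsto (fun τ => a * heatKernel ρ τ) (𝓝[>] 0) (𝓝 0) := by
    simpa using (tendsto_heatKernel_nhdsGT_zero hρ).const_mul a
  have hright : Tendsto (fun τ => b * heatKernel x (τ + L)) (𝓝[>] 0) (𝓝 (b * heatKernel x L)) := by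
    have hcont := continuousOn_heatKernel.continuousAt
      (prod_mem_nhds univ_mem (Ioi_mem_nhds hL) : univ ×ˢ Ioi 0 ∈ 𝓝 (x, L))
    exact (hcont.tendsto.comp (tendsto_nhdsWithin_of_tendsto_nhds (Continuous.tendsto'
      (f := fun τ => (x, τ + L)) (by fun_prop) _ _ (by simp)))).const_mul b
  exact ((eventually_mem_nhdsWithin (s := Ioi (0 : ℝ))).and (hleft.eventually_lt hright
    (mul_pos hb (heatKernel_pos x hL)))).exists

end HeatKernel

/-! ### Bounded solutions of linear equations and their limits -/

/-- `v` is continuous and bounded by `M` on `ℝ × I`, and solves there a linear equation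
`v_t = v_xx + c v` with `|c| ≤ C`; the coefficient `c` is hidden in `|v_t - v_xx| ≤ C |v|`. -/
structure IsLinearSolOn (C : ℝ≥0) (M : ℝ) (v : ℝ → ℝ → ℝ) (I : Set ℝ) : Prop where
  continuousOn : ContinuousOn (fun p : ℝ × ℝ => v p.1 p.2) (univ ×ˢ I)
  abs_apply_le : ∀ x, ∀ t ∈ I, |v x t| ≤ M
  exists_hasHeatOpAt : ∀ x, ∀ t ∈ I, ∃ h, HasHeatOpAt v h x t ∧ |h| ≤ C * |v x t|

namespace IsLinearSolOn

variable {C : ℝ≥0} {M : ℝ} {v : ℝ → ℝ → ℝ} {I J : Set ℝ}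

lemma mono (hv : IsLinearSolOn C M v I) (hJ : J ⊆ I) : IsLinearSolOn C M v J :=
  ⟨hv.continuousOn.mono (prod_mono le_rfl hJ), fun x t ht => hv.abs_apply_le x t (hJ ht),
    fun x t ht => hv.exists_hasHeatOpAt x t (hJ ht)⟩

lemma neg (hv : IsLinearSolOn C M v I) : IsLinearSolOn C M (fun x t => -v x t) I where
  continuousOn := hv.continuousOn.neg
  abs_apply_le x t ht := by simpa using hv.abs_apply_le x t ht
  exists_hasHeatOpAt x t ht := by
    obtain ⟨h, hh, hle⟩ := hv.exists_hasHeatOpAt x t ht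
    exact ⟨-h, by simpa using hh.const_mul (-1), by simpa using hle⟩

lemma exp_mul_sub_le {A B : ℝ → ℝ → ℝ} {K s t₁ : ℝ} (hv : IsLinearSolOn C M v (Icc s t₁))
    (hA : IsCaloricOn A (Icc s t₁)) (hB : IsCaloricOn B (Icc s t₁))
    (hA0 : ∀ x, ∀ t ∈ Icc s t₁, 0 ≤ A x t) (hAK : ∀ x, ∀ t ∈ Icc s t₁, A x t ≤ K)
    (hB0 : ∀ x, ∀ t ∈ Icc s t₁, 0 ≤ B x t) (hinit : ∀ x, A x s - B x s ≤ v x s)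
    (x : ℝ) {t : ℝ} (ht : t ∈ Icc s t₁) :
    exp (-(C * (t - s))) * A x t - exp (C * (t - s)) * B x t ≤ v x t := by
  set D : ℝ → ℝ → ℝ := fun x t =>
    v x t + (-exp (-(C * (t - s))) * A x t + exp (C * (t - s)) * B x t) with hD
  suffices 0 ≤ D x t by simp only [hD] at this; linarith
  refine nonneg_of_hasHeatOpAt (C := C) (N := M + K) ?_ (fun y τ hτ => ?_) (fun y => ?_)
    (fun y τ hτ hneg => ?_) x ht
  · exact hv.continuousOn.add (((by fun_prop : ContinuousOn _ _).mul hA.continuousOn).add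
      ((by fun_prop : ContinuousOn _ _).mul hB.continuousOn))
  · have hexp : exp (-(C * (τ - s))) ≤ 1 :=
      exp_le_one_iff.2 (neg_nonpos.2 (mul_nonneg C.2 (sub_nonneg.2 hτ.1)))
    have hAτ : exp (-(C * (τ - s))) * A y τ ≤ K :=
      (mul_le_of_le_one_left (hA0 y τ hτ) hexp).trans (hAK y τ hτ)
    have hBτ : 0 ≤ exp (C * (τ - s)) * B y τ := mul_nonneg (exp_nonneg _) (hB0 y τ hτ)
    simp only [hD]
    linarith [(abs_le.1 (hv.abs_apply_le y τ hτ)).1]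
  · simp only [hD, sub_self, mul_zero, neg_zero, exp_zero]
    linarith [hinit y]
  · obtain ⟨h, hh, hle⟩ := hv.exists_hasHeatOpAt y τ hτ
    have hlin : HasDerivAt (fun σ => C * (σ - s)) C τ := by
      simpa using ((hasDerivAt_id τ).sub_const s).const_mul (C : ℝ)
    refine ⟨_, hh.add (((hA.hasHeatOpAt y τ hτ).time_mul hlin.fun_neg.exp.fun_neg).add
      ((hB.hasHeatOpAt y τ hτ).time_mul hlin.exp)), ?_⟩
    have hP : 0 ≤ exp (-(C * (τ - s))) * A y τ := mul_nonneg (exp_nonneg _) (hA0 y τ hτ)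
    have hR : 0 ≤ exp (C * (τ - s)) * B y τ := mul_nonneg (exp_nonneg _) (hB0 y τ hτ)
    have habs : |v y τ| ≤ exp (-(C * (τ - s))) * A y τ + exp (C * (τ - s)) * B y τ - D y τ :=
      abs_le.2 ⟨by simp only [hD] at hneg ⊢; linarith, by simp only [hD] at hneg ⊢; linarith⟩
    have hCabs := mul_le_mul_of_nonneg_left habs C.coe_nonneg
    linarith [neg_le_of_abs_le hle]

end IsLinearSolOn

/-- `D` is a locally uniform limit along `l` of bounded solutions `d j` of linear equations as in
`IsLinearSolOn`, with `d j` defined on time intervals exhausting `ℝ`. Working with the approximants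
makes parabolic regularity theory for `D` unnecessary. -/
structure IsLinearLimit {ι : Type*} (C : ℝ≥0) (M : ℝ) (l : Filter ι) (d : ι → ℝ → ℝ → ℝ)
    (D : ℝ → ℝ → ℝ) : Prop where
  isLinearSolOn : ∀ a, ∀ᶠ j in l, IsLinearSolOn C M (d j) (Ioi a)
  tendsto : TendstoLocallyUniformly (fun j (p : ℝ × ℝ) => d j p.1 p.2) (fun p => D p.1 p.2) l

namespace IsLinearLimit

variable {ι : Type*} {C : ℝ≥0} {M : ℝ} {l : Filter ι} {d : ι → ℝ → ℝ → ℝ} {D : ℝ → ℝ → ℝ}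

lemma neg (h : IsLinearLimit C M l d D) :
    IsLinearLimit C M l (fun j x t => -d j x t) (fun x t => -D x t) :=
  ⟨fun a => (h.isLinearSolOn a).mono fun _ hj => hj.neg,
    _root_.uniformContinuous_neg.comp_tendstoLocallyUniformly h.tendsto⟩

lemma eventually_sub_le (h : IsLinearLimit C M l d D) {A : ℝ → ℝ} {K b s β : ℝ}
    (hAK : ∀ x, A x ≤ K) (hb : 0 ≤ b) (hinit : ∀ x, A x - b ≤ D x s) (hβ : 0 < β) :
    ∀ᶠ j in l, ∀ x, A x - (b + β * (1 + x ^ 2)) ≤ d j x s := by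
  obtain ⟨R, hR0, hR⟩ : ∃ R, 0 ≤ R ∧ K + M ≤ β * R ^ 2 :=
    ((eventually_ge_atTop 0).and ((tendsto_pow_atTop two_ne_zero).const_mul_atTop hβ
      |>.eventually_ge_atTop (K + M))).exists
  have hunif : ∀ᶠ j in l, ∀ p ∈ Icc (-R) R ×ˢ {s}, dist (D p.1 p.2) (d j p.1 p.2) < β :=
    Metric.tendstoUniformlyOn_iff.1 (tendstoLocallyUniformly_iff_forall_isCompact.1 h.tendsto _
      (isCompact_Icc.prod isCompact_singleton)) β hβ
  filter_upwards [hunif, h.isLinearSolOn (s - 1)] with j hj hsol x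
  rcases le_or_gt |x| R with hx | hx
  · have hclose := (abs_lt.1 (hj (x, s) ⟨Set.mem_Icc.2 (abs_le.1 hx), rfl⟩)).2
    have : 0 ≤ β * x ^ 2 := by positivity
    dsimp only at hclose
    linarith [hinit x]
  · have hfar : β * R ^ 2 ≤ β * x ^ 2 := by rw [← sq_abs x]; gcongr
    have hlow := neg_le_of_abs_le (hsol.abs_apply_le x s (show s - 1 < s by linarith))
    linarith [hAK x]

variable [l.NeBot]

lemma continuous (h : IsLinearLimit C M l d D) : Continuous fun p : ℝ × ℝ => D p.1 p.2 := by
  refine continuous_iff_continuousAt.2 fun p => ?_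
  have hcont : ContinuousOn (fun q : ℝ × ℝ => D q.1 q.2) (univ ×ˢ Ioi (p.2 - 1)) :=
    h.tendsto.tendstoLocallyUniformlyOn.continuousOn
      ((h.isLinearSolOn (p.2 - 1)).mono fun _ hj => hj.continuousOn).frequently
  exact hcont.continuousAt (prod_mem_nhds univ_mem (Ioi_mem_nhds (by linarith)))

lemma exp_mul_sub_le (h : IsLinearLimit C M l d D) {A : ℝ → ℝ → ℝ} {K b s t : ℝ}
    (hA : IsCaloricOn A (Icc s t)) (hA0 : ∀ x, ∀ τ ∈ Icc s t, 0 ≤ A x τ)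
    (hAK : ∀ x, ∀ τ ∈ Icc s t, A x τ ≤ K) (hb : 0 ≤ b) (hinit : ∀ x, A x s - b ≤ D x s)
    (hst : s ≤ t) (x : ℝ) :
    exp (-(C * (t - s))) * A x t - exp (C * (t - s)) * b ≤ D x t := by
  have hperturbed : ∀ β > 0, exp (-(C * (t - s))) * A x t -
      exp (C * (t - s)) * (b + β * (1 + (x ^ 2 + 2 * (t - s)))) ≤ D x t := fun β hβ => by
    refine ge_of_tendsto (h.tendsto.tendstoLocallyUniformlyOn.tendsto_at (mem_univ (x, t))) ?_
    filter_upwards [h.isLinearSolOn (s - 1),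
      h.eventually_sub_le (fun y => hAK y s ⟨le_rfl, hst⟩) hb hinit hβ] with j hsol hj
    refine (hsol.mono fun τ hτ => ?_).exp_mul_sub_le hA
      ((IsCaloricOn.const b _).add (((IsCaloricOn.const 1 _).add (.sq_add s _)).const_mul β))
      hA0 hAK (fun y τ hτ => ?_) (fun y => by simpa using hj y) x ⟨hst, le_rfl⟩
    · exact show s - 1 < τ by linarith [hτ.1]
    · have := sub_nonneg.2 hτ.1
      positivity
  have hlim : Tendsto (fun β => exp (-(C * (t - s))) * A x t -
      exp (C * (t - s)) * (b + β * (1 + (x ^ 2 + 2 * (t - s))))) (𝓝[>] 0)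
      (𝓝 (exp (-(C * (t - s))) * A x t - exp (C * (t - s)) * b)) := by
    refine tendsto_nhdsWithin_of_tendsto_nhds (Continuous.tendsto' (by fun_prop) _ _ (by simp))
  exact le_of_tendsto hlim (eventually_mem_nhdsWithin.mono hperturbed)

lemma nonneg (h : IsLinearLimit C M l d D) {s t : ℝ} (hinit : ∀ x, 0 ≤ D x s) (hst : s ≤ t)
    (x : ℝ) : 0 ≤ D x t := by
  simpa using h.exp_mul_sub_le (A := fun _ _ => 0) (K := 0) (.const 0 _) (fun _ _ _ => le_rfl)
    (fun _ _ _ => le_rfl) le_rfl (by simpa using hinit) hst x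

/-- The barrier is a multiple of a heat kernel concentrated at `z`, lowered by its value at
distance `ρ`; the lowering becomes negligible as the concentration time `τ` tends to `0`. -/
theorem pos (h : IsLinearLimit C M l d D) {s t : ℝ} (hinit : ∀ x, 0 ≤ D x s) (hst : s < t)
    {z : ℝ} (hz : 0 < D z s) (x : ℝ) : 0 < D x t := by
  obtain ⟨ρ, hρ, hball⟩ : ∃ ρ > 0, ∀ y, |y - z| < ρ → D z s / 2 < D y s :=
    Metric.eventually_nhds_iff.1 ((h.continuous.comp (Continuous.prodMk_left s)).continuousAt
      (x := z) |>.eventually (lt_mem_nhds (half_lt_self hz)))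
  obtain ⟨τ, hτ, hwin⟩ := exists_mul_heatKernel_lt (a := exp (C * (t - s)))
    (exp_pos (-(C * (t - s)))) hρ.ne' (sub_pos.2 hst) (x - z)
  set k := D z s / 2 * √τ with hk
  have hk0 : 0 < k := by positivity
  have hkK : ∀ y, k * heatKernel y τ ≤ D z s / 2 := fun y => calc
    k * heatKernel y τ ≤ k * (√τ)⁻¹ := by gcongr; exact heatKernel_le_inv_sqrt y hτ.le
    _ = D z s / 2 := by rw [hk]; field_simp
  have hbarrier := h.exp_mul_sub_le (A := fun y σ => k * heatKernel (y - z) (τ - s + σ))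
    (K := k * (√τ)⁻¹) (b := k * heatKernel ρ τ) (s := s) (t := t)
    (((isCaloricOn_heatKernel z hτ s).const_mul k).mono Icc_subset_Ici_self)
    (fun y σ _ => mul_nonneg hk0.le (heatKernel_nonneg _ _)) (fun y σ hσ => ?_)
    (mul_nonneg hk0.le (heatKernel_nonneg _ _)) (fun y => ?_) hst.le x
  · rw [show τ - s + t = τ + (t - s) by ring] at hbarrier
    nlinarith
  · have hle : τ ≤ τ - s + σ := by linarith [hσ.1]
    gcongr
    exact (heatKernel_le_inv_sqrt _ (hτ.le.trans hle)).trans (by gcongr)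
  · rw [sub_add_cancel]
    have hnear := hkK (y - z)
    have hb0 : 0 ≤ k * heatKernel ρ τ := mul_nonneg hk0.le (heatKernel_nonneg _ _)
    rcases lt_or_ge |y - z| ρ with hy | hy
    · linarith [hball y hy]
    · have : k * heatKernel (y - z) τ ≤ k * heatKernel ρ τ := by
        gcongr
        exact heatKernel_le_of_abs_le hτ.le (by rwa [abs_of_pos hρ])
      linarith [hinit y]

theorem eq_zero_of_sign (h : IsLinearLimit C M l d D)
    (hsign : ∀ t, (∀ x, 0 ≤ D x t) ∨ (∀ x, D x t ≤ 0)) {x₁ t₁ : ℝ} (hzero : D x₁ t₁ = 0)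
    (x t : ℝ) : D x t = 0 := by
  have hpast : ∀ s < t₁, ∀ y, D y s = 0 := fun s hs y => by
    by_contra hne
    rcases hsign s with hpos | hneg
    · exact (h.pos hpos hs ((hpos y).lt_of_ne' hne) x₁).ne' hzero
    · exact (h.neg.pos (fun z => neg_nonneg.2 (hneg z)) hs
        (neg_pos.2 ((hneg y).lt_of_ne hne)) x₁).ne' (neg_eq_zero.2 hzero)
  rcases lt_or_ge t t₁ with ht | ht
  · exact hpast t ht x
  · have hinit := hpast (t₁ - 1) (by linarith)
    refine le_antisymm (neg_nonneg.1 ?_) ?_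
    · exact h.neg.nonneg (fun y => by rw [hinit y, neg_zero]) (by linarith : t₁ - 1 ≤ t) x
    · exact h.nonneg (fun y => (hinit y).ge) (by linarith : t₁ - 1 ≤ t) x

end IsLinearLimit

/-! ### Preservation of a single sign change -/

lemma HasHeatOpAt.isSupersolAt_mul_add_mul {a b v : ℝ → ℝ → ℝ} {g : ℝ → ℝ} {c h k t : ℝ}
    {p : Fin 2 → ℝ} (ha : HasHeatOpAt a 0 (p 0) t) (hb : HasHeatOpAt b 0 (p 1) t)
    (hv₀ : HasHeatOpAt v h (p 0) t) (hv₁ : HasHeatOpAt v k (p 1) t)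
    (hg : HasDerivAt g (c * g t) t)
    (hle : c * (v (p 0) t * v (p 1) t) ≤ h * v (p 1) t + v (p 0) t * k) :
    IsSupersolAt c (fun q τ => g τ * (a (q 0) τ + b (q 1) τ) + v (q 0) τ * v (q 1) τ) p t := by
  obtain ⟨at', axx, hat, haxx, ha⟩ := ha
  obtain ⟨bt, bxx, hbt, hbxx, hb⟩ := hb
  obtain ⟨v₀t, v₀xx, hv₀t, hv₀xx, rfl⟩ := hv₀
  obtain ⟨v₁t, v₁xx, hv₁t, hv₁xx, rfl⟩ := hv₁
  refine ⟨_, ![g t * axx + v (p 1) t * v₀xx, g t * bxx + v (p 0) t * v₁xx],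
    (hg.mul (hat.add hbt)).add (hv₀t.mul hv₁t), Fin.forall_fin_two.2 ⟨?_, ?_⟩, ?_⟩
  · simpa [mul_comm] using ((haxx.add (.const (b (p 1) t) _)).const_mul (g t)).add
      (hv₀xx.const_mul (v (p 1) t))
  · simpa [add_comm] using ((hbxx.add (.const (a (p 0) t) _)).const_mul (g t)).add
      (hv₁xx.const_mul (v (p 0) t))
  · obtain rfl : at' = axx := sub_eq_zero.1 ha
    obtain rfl : bt = bxx := sub_eq_zero.1 hb
    simp only [Fin.sum_univ_two, Matrix.cons_val_zero, Matrix.cons_val_one, Pi.add_apply]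
    linarith

lemma negPart_mul_posPart_eq_neg_mul {r r' : ℝ} (hr : r < 0) (hr' : 0 < r') :
    r⁻ * r'⁺ = -(r * r') := by
  rw [negPart_eq_neg.2 hr.le, posPart_eq_self.2 hr'.le, neg_mul]

lemma neg_and_pos_of_negPart_mul_posPart_pos {r r' : ℝ} (h : 0 < r⁻ * r'⁺) : r < 0 ∧ 0 < r' :=
  ⟨negPart_pos_iff.1 (pos_of_mul_pos_left h (posPart_nonneg _)),
    posPart_pos_iff.1 (pos_of_mul_pos_right h (negPart_nonneg _))⟩

namespace IsLinearSolOn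

variable {C : ℝ≥0} {M : ℝ} {v : ℝ → ℝ → ℝ}

lemma negPart_apply_le {I : Set ℝ} (hv : IsLinearSolOn C M v I) {t : ℝ} (ht : t ∈ I) (x : ℝ) :
    (v x t)⁻ ≤ M := by
  linarith [posPart_add_negPart (v x t), posPart_nonneg (v x t), hv.abs_apply_le x t ht]

lemma posPart_apply_le {I : Set ℝ} (hv : IsLinearSolOn C M v I) {t : ℝ} (ht : t ∈ I) (x : ℝ) :
    (v x t)⁺ ≤ M := by
  linarith [posPart_add_negPart (v x t), negPart_nonneg (v x t), hv.abs_apply_le x t ht]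

lemma negPart_mul_posPart_le_sq {I : Set ℝ} (hv : IsLinearSolOn C M v I) {t : ℝ} (ht : t ∈ I)
    (x y : ℝ) : (v x t)⁻ * (v y t)⁺ ≤ M ^ 2 := by
  rw [pow_two]
  exact mul_le_mul (hv.negPart_apply_le ht x) (hv.posPart_apply_le ht y) (posPart_nonneg _)
    ((abs_nonneg _).trans (hv.abs_apply_le x t ht))

lemma isSupersolAt_sub_negPart_mul_posPart {I : Set ℝ} {a b : ℝ → ℝ → ℝ} {s t : ℝ} {p : Fin 2 → ℝ}
    (hv : IsLinearSolOn C M v I) (ha : IsCaloricOn a I) (hb : IsCaloricOn b I) (ht : t ∈ I)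
    (hv₀ : v (p 0) t < 0) (hv₁ : 0 < v (p 1) t) :
    IsSupersolAt (2 * C) (fun q τ => exp (2 * C * (τ - s)) * (a (q 0) τ + b (q 1) τ) -
      (v (q 0) τ)⁻ * (v (q 1) τ)⁺) p t := by
  obtain ⟨h, hh, hle⟩ := hv.exists_hasHeatOpAt (p 0) t ht
  obtain ⟨k, hk, kle⟩ := hv.exists_hasHeatOpAt (p 1) t ht
  rw [abs_of_neg hv₀] at hle
  rw [abs_of_pos hv₁] at kle
  have hexp : HasDerivAt (fun τ => exp (2 * C * (τ - s))) (2 * C * exp (2 * C * (t - s))) t := by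
    simpa [mul_comm] using (((hasDerivAt_id t).sub_const s).const_mul (2 * (C : ℝ))).exp
  have hsuper := HasHeatOpAt.isSupersolAt_mul_add_mul (ha.hasHeatOpAt _ t ht)
    (hb.hasHeatOpAt _ t ht) hh hk hexp
    (by nlinarith [neg_le_of_abs_le hle, le_of_abs_le kle])
  have heq : ∀ x y τ, v x τ < 0 → 0 < v y τ →
      exp (2 * C * (τ - s)) * (a x τ + b y τ) - (v x τ)⁻ * (v y τ)⁺ =
        exp (2 * C * (τ - s)) * (a x τ + b y τ) + v x τ * v y τ := fun x y τ hx hy => by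
    rw [negPart_mul_posPart_eq_neg_mul hx hy, sub_neg_eq_add]
  obtain ⟨v₀t, _, hv₀t, ⟨_, hv₀x, _⟩, -⟩ := hh
  obtain ⟨v₁t, _, hv₁t, ⟨_, hv₁x, _⟩, -⟩ := hk
  refine hsuper.congr_of_eventuallyEq ?_ (Fin.forall_fin_two.2 ⟨?_, ?_⟩)
  · filter_upwards [hv₀t.continuousAt.eventually_lt_const hv₀,
      hv₁t.continuousAt.eventually_const_lt hv₁] with τ h₀ h₁ using heq _ _ _ h₀ h₁
  · filter_upwards [hv₀x.self_of_nhds.continuousAt.eventually_lt_const hv₀] with z hz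
    exact heq _ _ _ (by simpa using hz) (by simpa using hv₁)
  · filter_upwards [hv₁x.self_of_nhds.continuousAt.eventually_const_lt hv₁] with z hz
    exact heq _ _ _ (by simpa using hv₀) (by simpa using hz)

/-- The product `v⁻(x,t) v⁺(y,t)` is a subsolution in the two space variables where it is positive,
and it vanishes on the diagonal, so that the minimum principle applies on `{x ≤ y}`. -/
theorem negPart_mul_posPart_le {a b : ℝ → ℝ → ℝ} {s t₁ : ℝ} (hv : IsLinearSolOn C M v (Icc s t₁))
    (ha : IsCaloricOn a (Icc s t₁)) (hb : IsCaloricOn b (Icc s t₁))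
    (ha0 : ∀ x, ∀ t ∈ Icc s t₁, 0 ≤ a x t) (hb0 : ∀ x, ∀ t ∈ Icc s t₁, 0 ≤ b x t)
    (hinit : ∀ x y, x ≤ y → (v x s)⁻ * (v y s)⁺ ≤ a x s + b y s)
    {x y t : ℝ} (hxy : x ≤ y) (ht : t ∈ Icc s t₁) :
    (v x t)⁻ * (v y t)⁺ ≤ exp (2 * C * (t - s)) * (a x t + b y t) := by
  set w : (Fin 2 → ℝ) → ℝ → ℝ := fun p τ =>
    exp (2 * C * (τ - s)) * (a (p 0) τ + b (p 1) τ) - (v (p 0) τ)⁻ * (v (p 1) τ)⁺ with hw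
  have hcomp {u : ℝ → ℝ → ℝ} (i : Fin 2)
      (hu : ContinuousOn (fun p : ℝ × ℝ => u p.1 p.2) (univ ×ˢ Icc s t₁)) :
      ContinuousOn (fun p : (Fin 2 → ℝ) × ℝ => u (p.1 i) p.2) ({p | p 0 ≤ p 1} ×ˢ Icc s t₁) :=
    hu.comp (f := fun p : (Fin 2 → ℝ) × ℝ => (p.1 i, p.2)) (by fun_prop)
      fun p hp => ⟨trivial, hp.2⟩
  have hab : ∀ p : Fin 2 → ℝ, ∀ τ ∈ Icc s t₁,
      0 ≤ exp (2 * C * (τ - s)) * (a (p 0) τ + b (p 1) τ) := fun p τ hτ =>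
    mul_nonneg (exp_nonneg _) (add_nonneg (ha0 _ τ hτ) (hb0 _ τ hτ))
  suffices 0 ≤ w ![x, y] t by simpa [hw] using this
  refine nonneg_of_isSupersolAt (Q := {p | p 0 ≤ p 1}) (C := 2 * C) (N := M ^ 2)
    (isClosed_le (by fun_prop) (by fun_prop)) ?_ (fun p _ τ hτ => ?_)
    (fun p hp τ hτ hneg => ?_) hxy ht
  · exact ((by fun_prop : ContinuousOn _ _).mul ((hcomp 0 ha.continuousOn).add
      (hcomp 1 hb.continuousOn))).sub
      ((continuous_negPart.comp_continuousOn (hcomp 0 hv.continuousOn)).mul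
        (continuous_posPart.comp_continuousOn (hcomp 1 hv.continuousOn)))
  · linarith [hab p τ hτ, hv.negPart_mul_posPart_le_sq hτ (p 0) (p 1)]
  · obtain ⟨hv₀, hv₁⟩ := neg_and_pos_of_negPart_mul_posPart_pos (r := v (p 0) τ)
      (r' := v (p 1) τ) (by linarith [hab p τ hτ])
    have hlt : p 0 < p 1 := lt_of_le_of_ne hp fun h => by rw [h] at hv₀; linarith
    refine ⟨lt_of_le_of_ne hτ.1 ?_, ?_,
      hv.isSupersolAt_sub_negPart_mul_posPart ha hb hτ hv₀ hv₁⟩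
    · rintro rfl
      simp only [hw, sub_self, mul_zero, exp_zero, one_mul] at hneg
      linarith [hinit _ _ hp]
    · exact ((continuous_apply 0).continuousAt.eventually_lt (continuous_apply 1).continuousAt
        hlt).mono fun q hq => hq.le

end IsLinearSolOn

/-- As `t → 0⁺`, locally uniformly away from `a`, the negative part of `v` vanishes on the left of
`a` and its positive part vanishes on the right: `v` changes sign at most at `a`, from positive to
negative. -/
def HasInitialSignChangeAt (v : ℝ → ℝ → ℝ) (a : ℝ) : Prop :=
  ∀ K : Set ℝ, IsCompact K → a ∉ K → ∀ ε > 0, ∀ᶠ s in 𝓝[>] 0, ∀ x ∈ K,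
    (x < a → (v x s)⁻ ≤ ε) ∧ (a < x → (v x s)⁺ ≤ ε)

namespace HasInitialSignChangeAt

variable {C : ℝ≥0} {M a ε : ℝ} {v : ℝ → ℝ → ℝ}

/-- The heat kernel, concentrated at scale `ε`, absorbs the possible discontinuity at `x = y = a`;
its coefficient makes it at least `M ^ 2` for `|x - a| ≤ ε`. -/
lemma eventually_negPart_mul_posPart_le (hsign : HasInitialSignChangeAt v a)
    (hv : IsLinearSolOn C M v (Ioi 0)) (hε : 0 < ε) :
    ∀ᶠ s in 𝓝[>] 0, ∀ x y, x ≤ y → (v x s)⁻ * (v y s)⁺ ≤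
      M ^ 2 * exp 1 / 2 * ε * heatKernel (x - a) (ε ^ 2 / 4) + ε * (M + x ^ 2) + ε * y ^ 2 := by
  obtain ⟨R, hR0, hR⟩ : ∃ R, 0 ≤ R ∧ M ^ 2 ≤ ε * R ^ 2 :=
    ((eventually_ge_atTop 0).and ((tendsto_pow_atTop two_ne_zero).const_mul_atTop hε
      |>.eventually_ge_atTop (M ^ 2))).exists
  have hK : IsCompact (Icc (-R) R ∩ {x | ε ≤ |x - a|}) :=
    isCompact_Icc.inter_right (isClosed_le continuous_const (by fun_prop))
  filter_upwards [hsign _ hK (fun h => hε.not_ge (by simpa using h.2)) ε hε,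
    self_mem_nhdsWithin] with s hs hs0 x y hxy
  have hM : 0 ≤ M := (abs_nonneg _).trans (hv.abs_apply_le 0 s hs0)
  have hkernel : 0 ≤ M ^ 2 * exp 1 / 2 * ε * heatKernel (x - a) (ε ^ 2 / 4) :=
    mul_nonneg (by positivity) (heatKernel_nonneg _ _)
  have hεM : 0 ≤ ε * M := by positivity
  have hεx : 0 ≤ ε * x ^ 2 := by positivity
  have hεy : 0 ≤ ε * y ^ 2 := by positivity
  have hprod := hv.negPart_mul_posPart_le_sq hs0 x y
  have hfar : ∀ z, R < |z| → M ^ 2 ≤ ε * z ^ 2 := fun z hz =>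
    hR.trans (by rw [← sq_abs z]; gcongr)
  rcases lt_or_ge R |x| with hx | hx
  · linarith [hfar x hx]
  rcases lt_or_ge R |y| with hy | hy
  · linarith [hfar y hy]
  rcases lt_or_ge |x - a| ε with hxa | hxa
  · have hnear : M ^ 2 ≤ M ^ 2 * exp 1 / 2 * ε * heatKernel (x - a) (ε ^ 2 / 4) := calc
      M ^ 2 = M ^ 2 * exp 1 / 2 * ε * heatKernel ε (ε ^ 2 / 4) := by
        rw [heatKernel_self_sq_div_four hε, exp_neg]; field_simp
      _ ≤ _ := by
        gcongr
        exact heatKernel_le_of_abs_le (by positivity) (hxa.le.trans (le_abs_self ε))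
    linarith
  rcases le_abs'.1 hxa with hleft | hright
  · have : (v x s)⁻ * (v y s)⁺ ≤ ε * M := mul_le_mul ((hs x ⟨abs_le.1 hx, hxa⟩).1 (by linarith))
      (hv.posPart_apply_le hs0 y) (posPart_nonneg _) hε.le
    linarith
  · have hya : ε ≤ |y - a| := (by linarith : ε ≤ y - a).trans (le_abs_self _)
    have : (v x s)⁻ * (v y s)⁺ ≤ M * ε :=
      mul_le_mul (hv.negPart_apply_le hs0 x)
        ((hs y ⟨abs_le.1 hy, hya⟩).2 (by linarith)) (posPart_nonneg _) hM
    linarith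

lemma negPart_mul_posPart_le_mul (hsign : HasInitialSignChangeAt v a)
    (hv : IsLinearSolOn C M v (Ioi 0)) {t x y : ℝ} (ht : 0 < t) (hxy : x ≤ y) (hε : 0 < ε) :
    (v x t)⁻ * (v y t)⁺ ≤ ε * (exp (2 * C * t) *
      (M ^ 2 * exp 1 / 2 * (√(t / 2))⁻¹ + (M + (x ^ 2 + 2 * t)) + (y ^ 2 + 2 * t))) := by
  have hM : 0 ≤ M := (abs_nonneg _).trans (hv.abs_apply_le x t ht)
  have hsmall : ∀ᶠ s in 𝓝[>] (0 : ℝ), s ∈ Ioo 0 (t / 2) := Ioo_mem_nhdsGT (half_pos ht)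
  obtain ⟨s, ⟨hs0, hst⟩, hinit⟩ :=
    (hsmall.and (hsign.eventually_negPart_mul_posPart_le hv hε)).exists
  set k := M ^ 2 * exp 1 / 2 * ε with hk
  have hts : 0 ≤ t - s := by linarith
  have hkernel0 := heatKernel_nonneg (x - a) (ε ^ 2 / 4 - s + t)
  have hkernel : heatKernel (x - a) (ε ^ 2 / 4 - s + t) ≤ (√(t / 2))⁻¹ := by
    have : t / 2 ≤ ε ^ 2 / 4 - s + t := by linarith [sq_nonneg ε]
    exact (heatKernel_le_inv_sqrt _ (by linarith)).trans (by gcongr)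
  have hpoly (z : ℝ) {τ : ℝ} (hτ : τ ∈ Icc s t) : 0 ≤ z ^ 2 + 2 * (τ - s) := by
    have := sub_nonneg.2 hτ.1
    positivity
  calc (v x t)⁻ * (v y t)⁺
    _ ≤ exp (2 * C * (t - s)) * (k * heatKernel (x - a) (ε ^ 2 / 4 - s + t) +
          ε * (M + (x ^ 2 + 2 * (t - s))) + ε * (y ^ 2 + 2 * (t - s))) := by
      refine (hv.mono fun τ hτ => hs0.trans_le hτ.1).negPart_mul_posPart_le
        ((((isCaloricOn_heatKernel a (by positivity : 0 < ε ^ 2 / 4) s).mono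
          Icc_subset_Ici_self).const_mul k).add
          (((IsCaloricOn.const M _).add (.sq_add s _)).const_mul ε))
        ((IsCaloricOn.sq_add s _).const_mul ε) (fun z τ hτ => ?_)
        (fun z τ hτ => mul_nonneg hε.le (hpoly z hτ)) (fun z z' hz => ?_) hxy ⟨by linarith, le_rfl⟩
      · exact add_nonneg (mul_nonneg (by positivity) (heatKernel_nonneg _ _))
          (mul_nonneg hε.le (add_nonneg hM (hpoly z hτ)))
      · simpa using hinit z z' hz
    _ ≤ exp (2 * C * t) * (k * (√(t / 2))⁻¹ + ε * (M + (x ^ 2 + 2 * t)) +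
          ε * (y ^ 2 + 2 * t)) := by
      gcongr <;> exact sub_le_self t hs0.le
    _ = _ := by rw [hk]; ring

theorem nonpos_right_of_neg (hsign : HasInitialSignChangeAt v a)
    (hv : IsLinearSolOn C M v (Ioi 0)) {t x y : ℝ} (ht : 0 < t) (hxy : x ≤ y)
    (hx : v x t < 0) : v y t ≤ 0 := by
  by_contra! hy
  have hlim (B : ℝ) : Tendsto (fun ε => ε * B) (𝓝[>] 0) (𝓝 0) :=
    tendsto_nhdsWithin_of_tendsto_nhds (Continuous.tendsto' (by fun_prop) _ _ (zero_mul B))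
  have hprod : (v x t)⁻ * (v y t)⁺ ≤ 0 := ge_of_tendsto (hlim _)
    (eventually_mem_nhdsWithin.mono fun ε hε => hsign.negPart_mul_posPart_le_mul hv ht hxy hε)
  exact hprod.not_gt (mul_pos (negPart_pos_iff.2 hx) (posPart_pos_iff.2 hy))

end HasInitialSignChangeAt

/-! ### Solutions of (E) between `0` and a barrier -/

lemma exists_upperBound_and_lipschitzOnWith {f : ℝ → ℝ → ℝ} {ω : ℝ → ℝ} {T : ℝ} (hT : 0 < T)
    (hf : ContDiff ℝ 1 (Function.uncurry f)) (hfper : Function.Periodic f T)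
    (hω : Continuous ω) (hωper : Function.Periodic ω T) :
    ∃ (M : ℝ) (C : ℝ≥0), (∀ t, ω t ≤ M) ∧ ∀ t, LipschitzOnWith C (f t) (Icc 0 (ω t)) := by
  obtain ⟨M, hM⟩ := (hωper.compact_of_continuous hT.ne' hω).bddAbove
  replace hM : ∀ t, ω t ≤ M := fun t => hM (mem_range_self t)
  obtain ⟨C, hC⟩ := (hf.contDiffOn (s := Icc 0 T ×ˢ Icc 0 M)).exists_lipschitzOnWith
    one_ne_zero ((convex_Icc 0 T).prod (convex_Icc 0 M)) (isCompact_Icc.prod isCompact_Icc)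
  refine ⟨M, C, hM, fun t => ?_⟩
  obtain ⟨τ, hτ, hτt⟩ := hfper.exists_mem_Ico₀ hT t
  rw [hτt]
  refine (LipschitzOnWith.of_dist_le_mul fun r hr r' hr' => ?_).mono (Icc_subset_Icc_right (hM t))
  simpa [Prod.dist_eq] using
    hC.dist_le_mul (τ, r) ⟨⟨hτ.1, hτ.2.le⟩, hr⟩ (τ, r') ⟨⟨hτ.1, hτ.2.le⟩, hr'⟩

namespace IsSolOn

variable {f u : ℝ → ℝ → ℝ} {I J : Set ℝ}

lemma mono (hu : IsSolOn f u I) (hJ : J ⊆ I) : IsSolOn f u J := by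
  obtain ⟨ut, ux, uxx, hut, hux, huxx, hutc, huxc, huxxc, heq⟩ := hu
  have hJ' : (univ : Set ℝ) ×ˢ J ⊆ univ ×ˢ I := prod_mono le_rfl hJ
  exact ⟨ut, ux, uxx, fun x t ht => hut x t (hJ ht), fun x t ht => hux x t (hJ ht),
    fun x t ht => huxx x t (hJ ht), hutc.mono hJ', huxc.mono hJ', huxxc.mono hJ',
    fun x t ht => heq x t (hJ ht)⟩

lemma comp_affine {σ : ℝ} (hu : IsSolOn f u I) (hσ : σ * σ = 1) (b : ℝ) :
    IsSolOn f (fun x t => u (σ * x + b) t) I := by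
  obtain ⟨ut, ux, uxx, hut, hux, huxx, hutc, huxc, huxxc, heq⟩ := hu
  have hlin (x : ℝ) : HasDerivAt (fun y => σ * y + b) σ x := by
    simpa using ((hasDerivAt_id x).const_mul σ).add_const b
  have hcomp {v : ℝ → ℝ → ℝ} (hv : ContinuousOn (fun p : ℝ × ℝ => v p.1 p.2) (univ ×ˢ I)) :
      ContinuousOn (fun p : ℝ × ℝ => v (σ * p.1 + b) p.2) (univ ×ˢ I) :=
    hv.comp (f := fun p : ℝ × ℝ => (σ * p.1 + b, p.2)) (by fun_prop) fun p hp => ⟨trivial, hp.2⟩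
  refine ⟨fun x t => ut (σ * x + b) t, fun x t => ux (σ * x + b) t * σ,
    fun x t => uxx (σ * x + b) t, fun x t ht => hut _ t ht,
    fun x t ht => (hux _ t ht).comp x (hlin x), fun x t ht => ?_, hcomp hutc,
    (hcomp huxc).mul continuousOn_const, hcomp huxxc, fun x t ht => heq _ t ht⟩
  refine (((huxx _ t ht).comp x (hlin x)).mul_const σ).congr_deriv ?_
  rw [mul_assoc, hσ, mul_one]

lemma comp_add_period {τ : ℝ} (hu : IsSolOn f u I) (hτ : Function.Periodic f τ) :
    IsSolOn f (fun x t => u x (t + τ)) ((· + τ) ⁻¹' I) := by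
  obtain ⟨ut, ux, uxx, hut, hux, huxx, hutc, huxc, huxxc, heq⟩ := hu
  have hcomp {v : ℝ → ℝ → ℝ} (hv : ContinuousOn (fun p : ℝ × ℝ => v p.1 p.2) (univ ×ˢ I)) :
      ContinuousOn (fun p : ℝ × ℝ => v p.1 (p.2 + τ)) (univ ×ˢ ((· + τ) ⁻¹' I)) :=
    hv.comp (f := fun p : ℝ × ℝ => (p.1, p.2 + τ)) (by fun_prop) fun p hp => ⟨trivial, hp.2⟩
  exact ⟨fun x t => ut x (t + τ), fun x t => ux x (t + τ), fun x t => uxx x (t + τ),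
    fun x t ht => (hut x _ ht).comp_add_const t τ, fun x t ht => hux x _ ht,
    fun x t ht => huxx x _ ht, hcomp hutc, hcomp huxc, hcomp huxxc,
    fun x t ht => (heq x _ ht).trans (by rw [hτ])⟩

lemma of_ode {ψ : ℝ → ℝ} (hf : Continuous (Function.uncurry f))
    (hψ : ∀ t, HasDerivAt ψ (f t (ψ t)) t) (I : Set ℝ) : IsSolOn f (fun _ t => ψ t) I := by
  have hψc : Continuous ψ := continuous_iff_continuousAt.2 fun t => (hψ t).continuousAt
  exact ⟨fun _ t => f t (ψ t), fun _ _ => 0, fun _ _ => 0, fun _ t _ => hψ t,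
    fun x t _ => hasDerivAt_const _ _, fun x t _ => hasDerivAt_const _ _,
    (hf.comp (continuous_snd.prodMk (hψc.comp continuous_snd))).continuousOn,
    continuousOn_const, continuousOn_const, fun x t _ => (zero_add _).symm⟩

lemma hasHeatOpAt (hu : IsSolOn f u I) (x : ℝ) {t : ℝ} (ht : t ∈ I) :
    HasHeatOpAt u (f t (u x t)) x t := by
  obtain ⟨ut, ux, uxx, hut, hux, huxx, -, -, -, heq⟩ := hu
  exact ⟨ut x t, uxx x t, hut x t ht,
    ⟨fun y => ux y t, .of_forall fun y => hux y t ht, huxx x t ht⟩,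
    by rw [heq x t ht, add_sub_cancel_left]⟩

lemma continuousOn (hu : IsSolOn f u I) (hI : IsOpen I) :
    ContinuousOn (fun p : ℝ × ℝ => u p.1 p.2) (univ ×ˢ I) := by
  obtain ⟨ut, ux, -, hut, hux, -, -, huxc, -, -⟩ := hu
  rintro ⟨x, t⟩ ⟨-, ht⟩
  obtain ⟨N, hN, hNI, hNc⟩ := local_compact_nhds (hI.mem_nhds ht)
  obtain ⟨K, hK⟩ := ((isCompact_closedBall x 1).prod hNc).exists_bound_of_continuousOn
    (huxc.mono (prod_mono (subset_univ _) hNI))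
  have hlip : ∀ τ ∈ N, LipschitzOnWith K.toNNReal (fun y => u y τ) (Metric.closedBall x 1) :=
    fun τ hτ => (convex_closedBall x 1).lipschitzOnWith_of_nnnorm_hasDerivWithin_le
      (fun y _ => (hux y τ (hNI hτ)).hasDerivWithinAt)
      fun y hy => NNReal.coe_le_coe.1 ((hK (y, τ) ⟨hy, hτ⟩).trans (le_coe_toNNReal K))
  have hcont := continuousOn_prod_of_continuousOn_lipschitzOnWith (fun p : ℝ × ℝ => u p.1 p.2)
    K.toNNReal (fun y _ τ hτ => (hut y τ (hNI hτ)).continuousAt.continuousWithinAt) hlip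
  exact (hcont.continuousAt (prod_mem_nhds (Metric.closedBall_mem_nhds x one_pos)
    hN)).continuousWithinAt

end IsSolOn

/-- `u` is a classical solution of (E) on `ℝ × I` with `0 ≤ u ≤ ω`. -/
structure IsSolBetween (f : ℝ → ℝ → ℝ) (ω : ℝ → ℝ) (u : ℝ → ℝ → ℝ) (I : Set ℝ) : Prop where
  isSolOn : IsSolOn f u I
  mem_Icc : ∀ x, ∀ t ∈ I, u x t ∈ Icc 0 (ω t)

namespace IsSolBetween

variable {f u w : ℝ → ℝ → ℝ} {ω : ℝ → ℝ} {I J : Set ℝ}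

lemma mono (hu : IsSolBetween f ω u I) (hJ : J ⊆ I) : IsSolBetween f ω u J :=
  ⟨hu.isSolOn.mono hJ, fun x t ht => hu.mem_Icc x t (hJ ht)⟩

lemma comp_affine {σ : ℝ} (hu : IsSolBetween f ω u I) (hσ : σ * σ = 1) (b : ℝ) :
    IsSolBetween f ω (fun x t => u (σ * x + b) t) I :=
  ⟨hu.isSolOn.comp_affine hσ b, fun _ => hu.mem_Icc _⟩

lemma comp_add_period {τ : ℝ} (hu : IsSolBetween f ω u I) (hf : Function.Periodic f τ)
    (hω : Function.Periodic ω τ) :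
    IsSolBetween f ω (fun x t => u x (t + τ)) ((· + τ) ⁻¹' I) :=
  ⟨hu.isSolOn.comp_add_period hf, fun x t ht => hω t ▸ hu.mem_Icc x _ ht⟩

lemma isLinearSolOn_sub {M : ℝ} {C : ℝ≥0} (hu : IsSolBetween f ω u I) (hw : IsSolBetween f ω w I)
    (hI : IsOpen I) (hM : ∀ t, ω t ≤ M) (hC : ∀ t, LipschitzOnWith C (f t) (Icc 0 (ω t))) :
    IsLinearSolOn C M (fun x t => u x t - w x t) I where
  continuousOn := (hu.isSolOn.continuousOn hI).sub (hw.isSolOn.continuousOn hI)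
  abs_apply_le x t ht := by
    obtain ⟨hu0, huω⟩ := hu.mem_Icc x t ht
    obtain ⟨hw0, hwω⟩ := hw.mem_Icc x t ht
    exact abs_sub_le_iff.2 ⟨by linarith [hM t], by linarith [hM t]⟩
  exists_hasHeatOpAt x t ht := by
    refine ⟨f t (u x t) - f t (w x t), ?_,
      (hC t).dist_le_mul _ (hu.mem_Icc x t ht) _ (hw.mem_Icc x t ht)⟩
    simpa [sub_eq_add_neg] using
      (hu.isSolOn.hasHeatOpAt x ht).add ((hw.isSolOn.hasHeatOpAt x ht).const_mul (-1))

end IsSolBetween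

namespace IsHeavisideSol

variable {f u W : ℝ → ℝ → ℝ} {ω : ℝ → ℝ} {α a : ℝ}

lemma isSolBetween (hu : IsHeavisideSol f α a ω u) : IsSolBetween f ω u (Ioi 0) :=
  ⟨hu.1, hu.2.1⟩

lemma hasInitialSignChangeAt_sub (hu : IsHeavisideSol f α a ω u)
    (hω : Tendsto ω (𝓝[>] 0) (𝓝 α)) (hW : ∀ x, ∀ t > 0, W x t ∈ Icc 0 (ω t)) :
    HasInitialSignChangeAt (fun x t => u x t - W x t) a := by
  intro K hK haK ε hε
  obtain ⟨δ, hδ, hinit⟩ := hu.2.2 K hK haK (ε / 2) (half_pos hε)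
  filter_upwards [Ioo_mem_nhdsGT hδ, hω.eventually_lt_const (by linarith : α < α + ε / 2)]
    with s hs hωs x hx
  have hclose := hinit s hs x hx
  obtain ⟨hW0, hWω⟩ := hW x s hs.1
  refine ⟨fun hxa => sup_le ?_ hε.le, fun hxa => sup_le ?_ hε.le⟩
  · rw [if_pos (sub_nonneg.2 hxa.le), mul_one] at hclose
    linarith [(abs_lt.1 hclose).1]
  · rw [if_neg (by linarith), mul_zero] at hclose
    linarith [(abs_lt.1 hclose).2]

theorem le_right_of_lt {M t x y : ℝ} {C : ℝ≥0} (hu : IsHeavisideSol f α a ω u)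
    (hω : Tendsto ω (𝓝[>] 0) (𝓝 α)) (hM : ∀ t, ω t ≤ M)
    (hC : ∀ t, LipschitzOnWith C (f t) (Icc 0 (ω t))) (hW : IsSolBetween f ω W (Ioi 0))
    (ht : 0 < t) (hxy : x ≤ y) (hlt : u x t < W x t) : u y t ≤ W y t :=
  sub_nonpos.1 <| (hu.hasInitialSignChangeAt_sub hω hW.mem_Icc).nonpos_right_of_neg
    (hu.isSolBetween.isLinearSolOn_sub hW isOpen_Ioi hM hC) ht hxy (sub_neg.2 hlt)

end IsHeavisideSol

/-! ### Limits of solutions and weak steepness -/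

/-- `V` is the locally uniform limit of solutions `v j` of (E) with `0 ≤ v j ≤ ω`, defined on time
intervals exhausting `ℝ`. This covers both entire solutions and the limits `u_∞`, without having to
know that the latter are differentiable. -/
structure IsSolLimit (f : ℝ → ℝ → ℝ) (ω : ℝ → ℝ) (v : ℕ → ℝ → ℝ → ℝ) (V : ℝ → ℝ → ℝ) : Prop where
  isSolBetween : ∀ a, ∀ᶠ j in atTop, IsSolBetween f ω (v j) (Ioi a)
  tendsto : TendstoLocallyUniformly (fun j (p : ℝ × ℝ) => v j p.1 p.2) (fun p => V p.1 p.2) atTop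

lemma IsSolBetween.isSolLimit {f w : ℝ → ℝ → ℝ} {ω : ℝ → ℝ} (hw : IsSolBetween f ω w univ) :
    IsSolLimit f ω (fun _ => w) w where
  isSolBetween _ := .of_forall fun _ => hw.mono (subset_univ _)
  tendsto _ hs _ := ⟨univ, univ_mem, .of_forall fun _ _ _ => refl_mem_uniformity hs⟩

namespace IsSolLimit

variable {f V W : ℝ → ℝ → ℝ} {ω : ℝ → ℝ} {v w : ℕ → ℝ → ℝ → ℝ}

lemma comp_affine {σ : ℝ} (h : IsSolLimit f ω v V) (hσ : σ * σ = 1) (b : ℝ) :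
    IsSolLimit f ω (fun j x t => v j (σ * x + b) t) (fun x t => V (σ * x + b) t) where
  isSolBetween a := (h.isSolBetween a).mono fun _ hj => hj.comp_affine hσ b
  tendsto := h.tendsto.comp (fun p : ℝ × ℝ => (σ * p.1 + b, p.2)) (by fun_prop)

lemma tendsto_apply (h : IsSolLimit f ω v V) (x t : ℝ) :
    Tendsto (fun j => v j x t) atTop (𝓝 (V x t)) :=
  h.tendsto.tendstoLocallyUniformlyOn.tendsto_at (mem_univ (x, t))

lemma mem_Icc (h : IsSolLimit f ω v V) (x t : ℝ) : V x t ∈ Icc 0 (ω t) :=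
  isClosed_Icc.mem_of_tendsto (h.tendsto_apply x t) <|
    (h.isSolBetween (t - 1)).mono fun _ hj => hj.mem_Icc x t (sub_one_lt t)

lemma isLinearLimit_sub {M : ℝ} {C : ℝ≥0} (hv : IsSolLimit f ω v V) (hw : IsSolLimit f ω w W)
    (hM : ∀ t, ω t ≤ M) (hC : ∀ t, LipschitzOnWith C (f t) (Icc 0 (ω t))) :
    IsLinearLimit C M atTop (fun j x t => v j x t - w j x t) (fun x t => V x t - W x t) where
  isLinearSolOn a := by
    filter_upwards [hv.isSolBetween a, hw.isSolBetween a] with j hvj hwj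
    exact hvj.isLinearSolOn_sub hwj isOpen_Ioi hM hC
  tendsto := hv.tendsto.sub hw.tendsto

end IsSolLimit

lemma IsHeavisideSol.isSolLimit {f u U : ℝ → ℝ → ℝ} {ω : ℝ → ℝ} {ℓ : ℕ → ℝ} {α a T : ℝ}
    (hu : IsHeavisideSol f α a ω u) (hT : 0 < T) (hf : Function.Periodic f T)
    (hω : Function.Periodic ω T) (hU : IsULimit u ℓ T U) :
    IsSolLimit f ω (fun j x t => u (x + ℓ j) (t + j * T)) U where
  isSolBetween b := by
    filter_upwards [(tendsto_natCast_atTop_atTop.atTop_mul_const hT).eventually_ge_atTop (-b)]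
      with j hj
    have hshift := (hu.isSolBetween.comp_affine (one_mul 1) (ℓ j)).comp_add_period
      (hf.nat_mul j) (hω.nat_mul j)
    simp only [one_mul] at hshift
    exact hshift.mono fun t ht => show 0 < t + j * T by linarith [Set.mem_Ioi.1 ht]
  tendsto := by
    refine tendstoLocallyUniformly_iff_forall_isCompact.2 fun K hK =>
      Metric.tendstoUniformlyOn_iff.2 fun ε hε => ?_
    obtain ⟨J, hJ⟩ := hU K hK ε hε
    filter_upwards [eventually_ge_atTop J] with j hj p hp
    rw [dist_comm]
    exact hJ j hj p hp

lemma LimitAtPlusInf.tendsto {U : ℝ → ℝ → ℝ} {ψ : ℝ → ℝ} (h : LimitAtPlusInf U ψ) (t : ℝ) :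
    Tendsto (fun x => U x t) atTop (𝓝 (ψ t)) := by
  refine Metric.tendsto_nhds.2 fun ε hε => ?_
  obtain ⟨R, hR⟩ := h {t} isCompact_singleton ε hε
  exact (eventually_ge_atTop R).mono fun x hx => hR x hx t rfl

/-- Once a limit of solutions between `0` and `ω` is above `U` at some point, it is nowhere below
`U` to the right of that point at the same time. Unlike `Steeper`, this passes to limits of `U`
and involves no derivatives. -/
def IsWeaklySteepest (f : ℝ → ℝ → ℝ) (ω : ℝ → ℝ) (U : ℝ → ℝ → ℝ) : Prop :=
  ∀ ⦃v V⦄, IsSolLimit f ω v V → ∀ ⦃t x y⦄, x ≤ y → U x t < V x t → U y t ≤ V y t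

theorem IsHeavisideSol.isWeaklySteepest {f u U : ℝ → ℝ → ℝ} {ω : ℝ → ℝ} {ℓ : ℕ → ℝ}
    {α a T M : ℝ} {C : ℝ≥0} (hu : IsHeavisideSol f α a ω u) (hT : 0 < T)
    (hf : Function.Periodic f T) (hω : Function.Periodic ω T)
    (hω0 : Tendsto ω (𝓝[>] 0) (𝓝 α)) (hM : ∀ t, ω t ≤ M)
    (hC : ∀ t, LipschitzOnWith C (f t) (Icc 0 (ω t))) (hU : IsULimit u ℓ T U) :
    IsWeaklySteepest f ω U := by
  intro v V hV t x y hxy hlt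
  have hlim := (hu.isSolLimit hT hf hω hU).tendsto_apply
  have htime := (tendsto_natCast_atTop_atTop.atTop_mul_const hT).eventually_gt_atTop (-t)
  refine le_of_tendsto (hlim y t) ?_
  filter_upwards [(hlim x t).eventually_lt_const hlt, htime] with i hi hti
  refine ge_of_tendsto (hV.tendsto_apply y t) ?_
  filter_upwards [(hV.tendsto_apply x t).eventually_const_lt hi,
    hV.isSolBetween (-(i * T))] with j hj hsol
  have hshift := ((hsol.comp_affine (one_mul 1) (-ℓ i)).comp_add_period (hf.nat_mul i).neg
    (hω.nat_mul i).neg).mono (J := Ioi 0) fun τ hτ => by simpa using hτ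
  simpa using hu.le_right_of_lt hω0 hM hC hshift (t := t + i * T) (by linarith)
    (add_le_add_left hxy (ℓ i)) (by simpa using hj)

namespace IsWeaklySteepest

variable {f U V : ℝ → ℝ → ℝ} {ω ψ : ℝ → ℝ} {v : ℕ → ℝ → ℝ → ℝ}

lemma of_limitAtPlusInf (hU : IsWeaklySteepest f ω U) (hψ : LimitAtPlusInf U ψ) :
    IsWeaklySteepest f ω (fun _ t => ψ t) := by
  intro v V hV t x y hxy hlt
  have hlim (z : ℝ) : Tendsto (fun r => U (z + r) t) atTop (𝓝 (ψ t)) :=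
    (hψ.tendsto t).comp (tendsto_atTop_add_const_left _ z tendsto_id)
  refine le_of_tendsto (hlim y) ?_
  filter_upwards [(hlim x).eventually_lt_const hlt] with r hr
  simpa using hU (hV.comp_affine (one_mul 1) (-r)) (add_le_add_left hxy r) (by simpa using hr)

/-- For an `x`-independent function, reflecting `x` upgrades the comparison on the right to one on
both sides. -/
lemma le_or_ge (hψ : IsWeaklySteepest f ω (fun _ t => ψ t)) (hV : IsSolLimit f ω v V) (t : ℝ) :
    (∀ x, ψ t ≤ V x t) ∨ (∀ x, V x t ≤ ψ t) := by
  refine or_iff_not_imp_right.2 fun hnot y => ?_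
  obtain ⟨x, hx⟩ := not_forall.1 hnot
  rcases le_total x y with hxy | hyx
  · exact hψ hV hxy (not_le.1 hx)
  · have hreflect := hV.comp_affine (by norm_num : (-1 : ℝ) * -1 = 1) 0
    simpa using hψ hreflect (neg_le_neg hyx) (by simpa using hx)

theorem eq_of_apply_eq {M x₁ t₁ : ℝ} {C : ℝ≥0} (hψ : IsWeaklySteepest f ω (fun _ t => ψ t))
    (hψsol : IsSolBetween f ω (fun _ t => ψ t) univ) (hM : ∀ t, ω t ≤ M)
    (hC : ∀ t, LipschitzOnWith C (f t) (Icc 0 (ω t))) (hV : IsSolLimit f ω v V)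
    (heq : V x₁ t₁ = ψ t₁) (x t : ℝ) : V x t = ψ t :=
  sub_eq_zero.1 <| (hV.isLinearLimit_sub hψsol.isSolLimit hM hC).eq_zero_of_sign
    (by simpa using hψ.le_or_ge hV) (sub_eq_zero.2 heq) x t

end IsWeaklySteepest

lemma IsSolLimit.isSolBetween_of_limitAtPlusInf {f U : ℝ → ℝ → ℝ} {ω ψ : ℝ → ℝ}
    {v : ℕ → ℝ → ℝ → ℝ} (hf : Continuous (Function.uncurry f)) (hU : IsSolLimit f ω v U)
    (hlim : LimitAtPlusInf U ψ) (hψ : ∀ t, HasDerivAt ψ (f t (ψ t)) t) :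
    IsSolBetween f ω (fun _ t => ψ t) univ :=
  ⟨.of_ode hf hψ univ, fun _ t _ => isClosed_Icc.mem_of_tendsto (hlim.tendsto t)
    (.of_forall fun x => hU.mem_Icc x t)⟩

lemma IsULimit.apply_zero_eq {u V : ℝ → ℝ → ℝ} {ℓ : ℕ → ℝ} {T r : ℝ} (hV : IsULimit u ℓ T V)
    (hr : ∀ j : ℕ, 1 ≤ j → u (ℓ j) (j * T) = r) : V 0 0 = r := by
  refine eq_of_forall_dist_le fun ε hε => ?_
  obtain ⟨J, hJ⟩ := hV {0} isCompact_singleton ε hε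
  have hclose := hJ (max J 1) (le_max_left _ _) 0 rfl
  rw [Prod.fst_zero, Prod.snd_zero, zero_add, zero_add, hr _ (le_max_right J 1), ← dist_eq,
    dist_comm] at hclose
  exact hclose.le

theorem periodic_level_steepest_general {f u₀ U : ℝ → ℝ → ℝ} {ω ψ : ℝ → ℝ} {ℓ : ℕ → ℝ}
    {T α a : ℝ} (hT : 0 < T) (hf : ContDiff ℝ 1 (Function.uncurry f))
    (hfper : Function.Periodic f T) (hω : Continuous ω) (hωper : Function.Periodic ω T)
    (hω0 : ω 0 = α) (hu₀ : IsHeavisideSol f α a ω u₀) (hU : IsULimit u₀ ℓ T U)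
    (hψ : ∀ t, HasDerivAt ψ (f t (ψ t)) t) (hlim : LimitAtPlusInf U ψ) :
    (∀ w, IsSolOn f w univ → (∀ x t, 0 ≤ w x t ∧ w x t ≤ ω t) → Steeper T (fun _ t => ψ t) w) ∧
    ∀ (ℓ' : ℕ → ℝ) (V : ℝ → ℝ → ℝ), (∀ j : ℕ, 1 ≤ j → u₀ (ℓ' j) (j * T) = ψ 0) →
      IsULimit u₀ ℓ' T V → ∀ x t, V x t = ψ t := by
  obtain ⟨M, C, hM, hC⟩ := exists_upperBound_and_lipschitzOnWith hT hf hfper hω hωper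
  have hω0' : Tendsto ω (𝓝[>] 0) (𝓝 α) := hω0 ▸ hω.continuousWithinAt
  have hsteep : IsWeaklySteepest f ω (fun _ t => ψ t) :=
    (hu₀.isWeaklySteepest hT hfper hωper hω0' hM hC hU).of_limitAtPlusInf hlim
  have hψsol : IsSolBetween f ω (fun _ t => ψ t) univ :=
    (hu₀.isSolLimit hT hfper hωper hU).isSolBetween_of_limitAtPlusInf hf.continuous hlim hψ
  refine ⟨fun w hw hwω t' x₁ k heq => .inl fun x t => ?_, fun ℓ' V hℓ' hV => ?_⟩
  · have hshift : IsSolBetween f ω (fun x t => w x (t + k * T)) univ :=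
      IsSolBetween.comp_add_period ⟨hw, fun x t _ => hwω x t⟩ (hfper.int_mul k) (hωper.int_mul k)
    exact (hsteep.eq_of_apply_eq hψsol hM hC hshift.isSolLimit heq.symm x (t + t')).symm
  · exact hsteep.eq_of_apply_eq hψsol hM hC (hu₀.isSolLimit hT hfper hωper hV)
      (hV.apply_zero_eq hℓ')

/-- **Lemma 4.2.** Under (H1), if `u_∞(·,·;λ_k)` is a pulsating traveling front connecting
`ω_{k−1}` (at `−∞`) and `ω_k` (at `+∞`), then the `x`-independent entire solution `ω_k` is
steeper than any entire solution between `0` and `ω(α,·)`, and `ω_k ≡ u_∞(·,·;ω_k(0))`. -/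
theorem periodic_level_steepest
    (f : ℝ → ℝ → ℝ) (T α : ℝ) (ωsol : ℝ → ℝ → ℝ)
    (hT : 0 < T)
    (hf : ContDiff ℝ 2 (Function.uncurry f))
    (hfper : ∀ t u : ℝ, f (t + T) u = f t u)
    (hf0 : ∀ t : ℝ, f t 0 = 0)
    (hωinit : ∀ β : ℝ, ωsol β 0 = β)
    (hωode : ∀ β t : ℝ, HasDerivAt (ωsol β) (f t (ωsol β t)) t)
    (hα : 0 < α) (hαfix : ωsol α T = α)
    (hαper : ∀ t : ℝ, ωsol α (t + T) = ωsol α t)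
    (hαpos : ∀ t : ℝ, 0 < ωsol α t)
    (hH1 : HypH1 f α (ωsol α))
    (u₀ : ℝ → ℝ → ℝ) (hu₀ : IsHeavisideSol f α 0 (ωsol α) u₀)
    (lamk : ℝ) (hlamk : lamk ∈ Set.Ioo 0 α)
    (ℓk : ℕ → ℝ) (hℓk : ∀ j : ℕ, 1 ≤ j → u₀ (ℓk j) ((j : ℝ) * T) = lamk)
    (Uk : ℝ → ℝ → ℝ) (hUk : IsULimit u₀ ℓk T Uk)
    (ωkm1 ωk : ℝ → ℝ) (ck : ℝ)
    (hωkm1 : IsPeriodicSol f T ωkm1) (hωk : IsPeriodicSol f T ωk)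
    (horder : ∀ t : ℝ, 0 < ωk t ∧ ωk t < ωkm1 t)
    (hfront : IsPulsatingFront f T ωkm1 ωk Uk ck) :
    (∀ w : ℝ → ℝ → ℝ, IsSolOn f w Set.univ →
      (∀ x t : ℝ, 0 ≤ w x t ∧ w x t ≤ ωsol α t) →
      Steeper T (fun _ t => ωk t) w) ∧
    (∀ (ℓ' : ℕ → ℝ) (V : ℝ → ℝ → ℝ),
      (∀ j : ℕ, 1 ≤ j → u₀ (ℓ' j) ((j : ℝ) * T) = ωk 0) →
      IsULimit u₀ ℓ' T V → ∀ x t : ℝ, V x t = ωk t) := by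
  exact periodic_level_steepest_general hT (hf.of_le one_le_two) (fun t => funext (hfper t))
    (continuous_iff_continuousAt.2 fun t => (hωode α t).continuousAt) hαper (hωinit α) hu₀ hUk
    hωk.1 hfront.2.2.2

end
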